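/- arXiv:1007.4455 — 2 statements merged into one kernel-verified Lean document; each statement's English description precedes it below -/
import Mathlib

section
/- Let A generate an α-times resolvent family {S_α(t)}_{t≥0} on X, where 1 < α < 2, and let r > 0. If S_α(·) is of bounded semivariation on [0,r], then for every x, y ∈ D(A) and every continuous f : [0,r] → X, the function u(t) = S_α(t)x + ∫_0^t S_α(s)y ds + (P_α*f)(t) is a strong solution of D_t^α u = Au + f on [0,r] with u(0) = x, u'(0) = y. -/
open MeasureTheory Set

/-- `g β t = t^(β-1)/Γ(β)`. -/
noncomputable def g (β t : ℝ) : ℝ := t ^ (β - 1) / Real.Gamma β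

/-- `Pa α S t x = (g_{α-1} * S)(t) x = ∫_0^t g_{α-1}(t-s) S(s) x ds`. -/
noncomputable def Pa {X : Type*} [NormedAddCommGroup X] [NormedSpace ℂ X]
    (α : ℝ) (S : ℝ → X →L[ℂ] X) (t : ℝ) (x : X) : X :=
  ∫ s in (0:ℝ)..t, g (α - 1) (t - s) • S s x

/-- `G` is of bounded semivariation on `[0, r]`: the quantities
`‖∑ (G(d_{i+1}) - G(d_i)) x_i‖` over all partitions `0 = d_0 < ⋯ < d_n = r`
and all vectors of norm at most one are uniformly bounded. -/
def BoundedSemivariation {X : Type*} [NormedAddCommGroup X] [NormedSpace ℂ X]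
    (G : ℝ → X →L[ℂ] X) (r : ℝ) : Prop :=
  ∃ C : ℝ, ∀ (n : ℕ) (d : ℕ → ℝ) (x : ℕ → X),
    d 0 = 0 → d n = r → (∀ i < n, d i < d (i + 1)) → (∀ i, ‖x i‖ ≤ 1) →
    ‖∑ i ∈ Finset.range n, (G (d (i + 1)) - G (d i)) (x i)‖ ≤ C

/-- `u` is a strong solution of `D_t^α u = A u + f` on `[0, r]`, `u 0 = x`, `u' 0 = y`:
`u` takes values in `D(A)` with `t ↦ A u t` continuous (encoded via the graph of `A`),
`u` is continuously differentiable on `[0, r]`,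
`w t = ∫_0^t g_{2-α}(t-s) (u s - x - s y) ds` is twice continuously differentiable
on `[0, r]`, and `w'' t = A (u t) + f t` there. -/
def IsStrongSolution {X : Type*} [NormedAddCommGroup X] [NormedSpace ℂ X]
    (α : ℝ) (A : X →ₗ.[ℂ] X) (r : ℝ) (f : ℝ → X) (x y : X) (u : ℝ → X) : Prop :=
  ∃ Au u' w' w'' : ℝ → X,
    ContinuousOn u (Set.Icc 0 r) ∧
    (∀ t ∈ Set.Icc (0:ℝ) r, (u t, Au t) ∈ A.graph) ∧
    ContinuousOn Au (Set.Icc 0 r) ∧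
    (∀ t ∈ Set.Icc (0:ℝ) r, HasDerivWithinAt u (u' t) (Set.Icc 0 r) t) ∧
    ContinuousOn u' (Set.Icc 0 r) ∧
    (∀ t ∈ Set.Icc (0:ℝ) r,
      HasDerivWithinAt (fun τ => ∫ s in (0:ℝ)..τ, g (2 - α) (τ - s) • (u s - x - s • y))
        (w' t) (Set.Icc 0 r) t) ∧
    (∀ t ∈ Set.Icc (0:ℝ) r, HasDerivWithinAt w' (w'' t) (Set.Icc 0 r) t) ∧
    ContinuousOn w'' (Set.Icc 0 r) ∧
    (∀ t ∈ Set.Icc (0:ℝ) r, w'' t = Au t + f t) ∧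
    u 0 = x ∧ u' 0 = y

section Helpers
open Filter Topology


lemma g_intervalIntegrable {b : ℝ} (hb : 0 < b) (x y : ℝ) :
    IntervalIntegrable (g b) volume x y := by
  unfold g
  exact (intervalIntegral.intervalIntegrable_rpow' (by linarith)).div_const _

lemma g_nonneg {b t : ℝ} (hb : 0 < b) (ht : 0 ≤ t) : 0 ≤ g b t :=
  div_nonneg (Real.rpow_nonneg ht _) (Real.Gamma_pos_of_pos hb).le

lemma g_one (t : ℝ) : g 1 t = 1 := by simp [g]

lemma g_beta {a b t : ℝ} (ha : 0 < a) (hb : 0 < b) (ht : 0 < t) :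
    ∫ s in (0:ℝ)..t, g a s * g b (t - s) = g (a + b) t := by
  have h1 := Complex.betaIntegral_scaled (a : ℂ) (b : ℂ) ht
  rw [Complex.betaIntegral_eq_Gamma_mul_div _ _ (by simpa) (by simpa)] at h1
  have h2 : ∫ s in (0:ℝ)..t, s ^ (a - 1) * (t - s) ^ (b - 1)
      = t ^ (a + b - 1) * (Real.Gamma a * Real.Gamma b / Real.Gamma (a + b)) := by
    apply Complex.ofReal_injective
    rw [← intervalIntegral.integral_ofReal]
    have h3 : ∫ x in (0:ℝ)..t, ((x ^ (a - 1) * (t - x) ^ (b - 1) : ℝ) : ℂ)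
      = ∫ x in (0:ℝ)..t, (x : ℂ) ^ ((a:ℂ) - 1) * ((t : ℂ) - x) ^ ((b:ℂ) - 1) := by
      apply intervalIntegral.integral_congr
      intro x hx
      rw [uIcc_of_le ht.le] at hx
      simp only
      rw [Complex.ofReal_mul, Complex.ofReal_cpow hx.1, Complex.ofReal_cpow (by linarith [hx.2])]
      push_cast
      rfl
    rw [h3, h1]
    push_cast
    rw [Complex.ofReal_cpow ht.le, ← Complex.Gamma_ofReal, ← Complex.Gamma_ofReal,
      ← Complex.Gamma_ofReal]
    push_cast
    rfl
  have ga := (Real.Gamma_pos_of_pos ha).ne'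
  have gb := (Real.Gamma_pos_of_pos hb).ne'
  have gab := (Real.Gamma_pos_of_pos (add_pos ha hb)).ne'
  unfold g
  have : ∀ s, s ^ (a - 1) / Real.Gamma a * ((t - s) ^ (b - 1) / Real.Gamma b)
     = (1 / (Real.Gamma a * Real.Gamma b)) * (s ^ (a - 1) * (t - s) ^ (b - 1)) := by
    intro s; field_simp
  simp_rw [this]
  rw [intervalIntegral.integral_const_mul, h2]
  field_simp

section
set_option linter.unusedSectionVars false
variable {X : Type*} [NormedAddCommGroup X] [NormedSpace ℂ X]

/-- scalar convolution -/
noncomputable def cv (b : ℝ) (φ : ℝ → X) (t : ℝ) : X :=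
  ∫ s in (0:ℝ)..t, g b (t - s) • φ s

lemma cv_eq (b : ℝ) (φ : ℝ → X) (t : ℝ) :
    cv b φ t = ∫ s in (0:ℝ)..t, g b s • φ (t - s) := by
  have := intervalIntegral.integral_comp_sub_left (a := 0) (b := t)
    (fun s => g b s • φ (t - s)) t
  simp only [sub_sub_cancel, sub_self, sub_zero] at this
  rw [← this, cv]

lemma cv_congr {b t : ℝ} {φ ψ : ℝ → X} (ht : 0 ≤ t) (h : ∀ s ∈ Icc 0 t, φ s = ψ s) :
    cv b φ t = cv b ψ t := by
  unfold cv
  apply intervalIntegral.integral_congr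
  intro s hs
  rw [uIcc_of_le ht] at hs
  simp only [h s hs]

lemma cv_one (φ : ℝ → X) (t : ℝ) : cv 1 φ t = ∫ s in (0:ℝ)..t, φ s := by
  simp [cv, g_one]

/-- the extension -/
noncomputable def xt (r : ℝ) (f : ℝ → X) (t : ℝ) : X := f (max 0 (min r t))

lemma xt_eq {r t : ℝ} (f : ℝ → X) (ht : t ∈ Icc 0 r) : xt r f t = f t := by
  unfold xt; rw [min_eq_right ht.2, max_eq_right ht.1]

lemma xt_mem {r : ℝ} (hr : 0 ≤ r) (t : ℝ) : max 0 (min r t) ∈ Icc 0 r :=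
  ⟨le_max_left _ _, max_le hr (min_le_left _ _)⟩

lemma xt_cont {r : ℝ} (hr : 0 ≤ r) {f : ℝ → X} (hf : ContinuousOn f (Icc 0 r)) :
    Continuous (xt r f) := by
  apply hf.comp_continuous (by fun_prop) (xt_mem hr)

lemma xt_bdd {r : ℝ} (hr : 0 ≤ r) {f : ℝ → X} (hf : ContinuousOn f (Icc 0 r)) :
    ∃ M, ∀ t, ‖xt r f t‖ ≤ M := by
  obtain ⟨M, hM⟩ := isCompact_Icc.exists_bound_of_continuousOn hf
  exact ⟨M, fun t => hM _ (xt_mem hr t)⟩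

lemma cv_ext {b r t : ℝ} (φ : ℝ → X) (ht : t ∈ Icc 0 r) : cv b (xt r φ) t = cv b φ t :=
  cv_congr ht.1 fun _ hs => xt_eq _ ⟨hs.1, hs.2.trans ht.2⟩

lemma cv_scale {b t : ℝ} (hb : 0 < b) (φ : ℝ → X) (ht : 0 ≤ t) :
    cv b φ t = t ^ b • ∫ s in (0:ℝ)..1, g b s • φ (t - t * s) := by
  rcases ht.eq_or_lt with rfl | ht
  · simp [cv, Real.zero_rpow hb.ne']
  · rw [cv_eq]
    have := intervalIntegral.smul_integral_comp_mul_left (a := 0) (b := 1)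
      (fun s => g b s • φ (t - s)) t
    simp only [mul_zero, mul_one] at this
    rw [← this, ← intervalIntegral.integral_smul, ← intervalIntegral.integral_smul]
    apply intervalIntegral.integral_congr
    intro s hs
    rw [uIcc_of_le zero_le_one] at hs
    simp only
    rw [smul_smul, smul_smul]
    congr 1
    unfold g
    rw [Real.mul_rpow ht.le hs.1, Real.rpow_sub_one ht.ne']
    field_simp

lemma cv_contOn {b r : ℝ} (hb : 0 < b) (hr : 0 ≤ r) {φ : ℝ → X} (hφ : ContinuousOn φ (Icc 0 r)) :
    ContinuousOn (cv b φ) (Icc 0 r) := by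
  have hc := xt_cont hr hφ
  obtain ⟨M, hM⟩ := xt_bdd hr hφ
  have key : Continuous fun t : ℝ => t ^ b • ∫ s in (0:ℝ)..1, g b s • xt r φ (t - t * s) := by
    refine (Real.continuous_rpow_const hb.le).smul ?_
    · apply intervalIntegral.continuous_of_dominated_interval (bound := fun s => ‖g b s‖ * M)
      · intro x
        have := (g_intervalIntegrable hb 0 1).aestronglyMeasurable
        refine AEStronglyMeasurable.smul (f := g b) ?_ ?_
        · simpa [uIoc_of_le] using this
        · exact (hc.comp (by fun_prop)).aestronglyMeasurable
      · intro x
        refine Eventually.of_forall fun s _ => ?_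
        rw [norm_smul]
        gcongr
        exact hM _
      · exact (g_intervalIntegrable hb 0 1).norm.mul_const M
      · refine Eventually.of_forall fun s _ => ?_
        exact continuous_const.smul (hc.comp (by fun_prop))
  refine key.continuousOn.congr fun t ht => ?_
  simp only
  rw [← cv_scale hb _ ht.1, cv_ext _ ht]

lemma cv_cv [CompleteSpace X] {a b r t : ℝ} (ha : 0 < a) (hb : 0 < b) {φ : ℝ → X}
    (hφ0 : ContinuousOn φ (Icc 0 r)) (ht : t ∈ Icc 0 r) :
    cv a (cv b φ) t = cv (a + b) φ t := by
  have hr : 0 ≤ r := ht.1.trans ht.2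
  have e1 : cv a (cv b φ) t = cv a (cv b (xt r φ)) t :=
    cv_congr ht.1 fun s hs => (cv_ext _ ⟨hs.1, hs.2.trans ht.2⟩).symm
  rw [e1, ← cv_ext φ ht]
  have hφ := xt_cont hr hφ0
  obtain ⟨M, hM⟩ := xt_bdd hr hφ0
  generalize xt r φ = φ at hφ hM
  clear e1 hφ0
  replace ht := ht.1
  clear hr
  have hG : ∀ b, 0 < b → Integrable ((Ioc 0 t).indicator (g b)) := by
    intro b hb
    rw [integrable_indicator_iff measurableSet_Ioc, ← intervalIntegrable_iff_integrableOn_Ioc_of_le ht]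
    exact g_intervalIntegrable hb 0 t
  have hint : Integrable (Function.uncurry fun σ s : ℝ => ((Ioc 0 t).indicator (g a) (t - s) *
      (Ioc 0 t).indicator (g b) (s - σ)) • (Ioc 0 t).indicator φ σ) (volume.prod volume) := by
    have h1 := ((hG a ha).comp_sub_left t).convolution_integrand (ContinuousLinearMap.mul ℝ ℝ)
      (hG b hb).comp_neg
    have h2 : AEStronglyMeasurable (fun p : ℝ × ℝ => (Ioc 0 t).indicator φ p.1)
        (volume.prod volume) := by
      have : StronglyMeasurable ((Ioc 0 t).indicator φ) :=
        hφ.stronglyMeasurable.indicator measurableSet_Ioc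
      exact (this.comp_measurable measurable_fst).aestronglyMeasurable
    refine (h1.smul_bdd M h2 ?_).congr ?_
    · refine Eventually.of_forall fun p => ?_
      exact (norm_indicator_le_norm_self _ _).trans (hM _)
    · refine Eventually.of_forall fun p => ?_
      simp [Function.uncurry]
  have sw := integral_integral_swap hint
  have hR : ∫ s, ∫ σ, ((Ioc 0 t).indicator (g a) (t - s) *
      (Ioc 0 t).indicator (g b) (s - σ)) • (Ioc 0 t).indicator φ σ = cv a (cv b φ) t := by
    rw [cv, intervalIntegral.integral_of_le ht, integral_Ioc_eq_integral_Ioo,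
      ← integral_Ico_eq_integral_Ioo, ← integral_indicator measurableSet_Ico]
    congr 1 with s
    by_cases hs : s ∈ Ico 0 t
    · rw [indicator_of_mem hs, cv, intervalIntegral.integral_of_le hs.1,
        integral_Ioc_eq_integral_Ioo, ← integral_indicator measurableSet_Ioo, ← integral_smul]
      congr 1 with σ
      rw [indicator_of_mem (show t - s ∈ Ioc 0 t from ⟨by linarith [hs.2], by linarith [hs.1]⟩)]
      by_cases hσ : σ ∈ Ioo 0 s
      · rw [indicator_of_mem hσ, indicator_of_mem, indicator_of_mem, smul_smul]
        · exact ⟨hσ.1, by linarith [hσ.2, hs.2]⟩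
        · exact ⟨by linarith [hσ.2], by linarith [hσ.1, hs.2]⟩
      · rw [indicator_of_notMem hσ]
        by_cases h0 : 0 < σ
        · rw [indicator_of_notMem (a := s - σ)]
          · simp
          · intro h; exact hσ ⟨h0, by linarith [h.1]⟩
        · rw [indicator_of_notMem (a := σ)]
          · simp
          · intro h; exact h0 h.1
    · rw [indicator_of_notMem hs, indicator_of_notMem (a := t - s)]
      · simp
      · intro h; exact hs ⟨by linarith [h.2], by linarith [h.1]⟩
  have hL : ∫ σ, ∫ s, ((Ioc 0 t).indicator (g a) (t - s) *
      (Ioc 0 t).indicator (g b) (s - σ)) • (Ioc 0 t).indicator φ σ = cv (a + b) φ t := by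
    rw [cv, intervalIntegral.integral_of_le ht, integral_Ioc_eq_integral_Ioo,
      ← integral_indicator measurableSet_Ioo]
    apply integral_congr_ae
    have : ∀ᵐ σ : ℝ, σ ≠ t := by simp [ae_iff]
    filter_upwards [this] with σ hne
    rw [integral_smul_const]
    by_cases hσ : σ ∈ Ioo 0 t
    · rw [indicator_of_mem hσ, indicator_of_mem (show σ ∈ Ioc 0 t from ⟨hσ.1, hσ.2.le⟩)]
      congr 1
      rw [add_comm a b, ← g_beta hb ha (sub_pos.2 hσ.2)]
      have e := intervalIntegral.integral_comp_sub_right (a := σ) (b := t)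
        (fun s => g b s * g a (t - σ - s)) σ
      simp only [sub_self, sub_sub_sub_cancel_right] at e
      rw [← e, intervalIntegral.integral_of_le hσ.2.le, integral_Ioc_eq_integral_Ioo,
        ← integral_indicator measurableSet_Ioo]
      congr 1 with s
      by_cases hs : s ∈ Ioo σ t
      · rw [indicator_of_mem hs, indicator_of_mem, indicator_of_mem, mul_comm]
        · exact ⟨by linarith [hs.1], by linarith [hs.2, hσ.1]⟩
        · exact ⟨by linarith [hs.2], by linarith [hs.1, hσ.1]⟩
      · rw [indicator_of_notMem hs]
        by_cases h0 : σ < s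
        · rw [indicator_of_notMem (a := t - s)]
          · simp
          · intro h; exact hs ⟨h0, by linarith [h.1]⟩
        · rw [indicator_of_notMem (a := s - σ)]
          · simp
          · intro h; exact h0 (by linarith [h.1])
    · rw [indicator_of_notMem hσ, indicator_of_notMem (a := σ)]
      · simp
      · intro h; exact hσ ⟨h.1, lt_of_le_of_ne h.2 hne⟩
  rw [← hR, ← hL, sw]

lemma cv_one_deriv [CompleteSpace X] {r t : ℝ} {φ : ℝ → X} (hφ : ContinuousOn φ (Icc 0 r))
    (ht : t ∈ Icc 0 r) : HasDerivWithinAt (cv 1 φ) (φ t) (Icc 0 r) t := by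
  have hc := xt_cont (ht.1.trans ht.2) hφ
  have h := (intervalIntegral.integral_hasDerivAt_right (a := 0) (b := t)
    (hc.intervalIntegrable _ _) (hc.stronglyMeasurableAtFilter _ _) hc.continuousAt).hasDerivWithinAt
      (s := Icc 0 r)
  rw [xt_eq _ ht] at h
  refine h.congr (fun s hs => ?_) ?_
  · rw [← cv_ext _ hs, cv_one]
  · rw [← cv_ext _ ht, cv_one]

lemma tri {t : ℝ} (ht : 0 ≤ t) {c : ℝ → ℝ} (hc : IntervalIntegrable c volume 0 t)
    {H : ℝ → ℝ → X} (hH : Continuous (Function.uncurry H)) :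
    ∫ s in (0:ℝ)..t, ∫ τ in (0:ℝ)..(t - s), c τ • H τ s =
      ∫ τ in (0:ℝ)..t, c τ • ∫ s in (0:ℝ)..(t - τ), H τ s := by
  have hG : IntegrableOn c (Ioc 0 t) := 
    (intervalIntegrable_iff_integrableOn_Ioc_of_le ht).1 hc
  obtain ⟨M, hM⟩ := (isCompact_Icc.prod isCompact_Icc).exists_bound_of_continuousOn
    (s := Icc 0 t ×ˢ Icc 0 t) hH.continuousOn
  let E : Set (ℝ × ℝ) := {p | p.1 + p.2 ≤ t}
  have hE : MeasurableSet E := measurableSet_le (by fun_prop) (by fun_prop)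
  have hint : Integrable (Function.uncurry fun s τ : ℝ =>
      E.indicator (fun p => c p.2 • H p.2 p.1) (s, τ))
      ((volume.restrict (Ioc 0 t)).prod (volume.restrict (Ioc 0 t))) := by
    change Integrable (E.indicator (fun p => c p.2 • H p.2 p.1)) _
    refine Integrable.indicator ?_ hE
    have h1 : Integrable (fun p : ℝ × ℝ => c p.2) 
      ((volume.restrict (Ioc 0 t)).prod (volume.restrict (Ioc 0 t))) := hG.comp_snd _
    refine h1.smul_bdd M ?_ ?_
    · exact (hH.comp (by fun_prop : Continuous fun p : ℝ × ℝ => (p.2, p.1))).aestronglyMeasurable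
    · rw [Measure.prod_restrict]
      refine (ae_restrict_iff' (measurableSet_Ioc.prod measurableSet_Ioc)).2
        (Eventually.of_forall fun p hp => ?_)
      exact hM (p.2, p.1) ⟨Ioc_subset_Icc_self hp.2, Ioc_subset_Icc_self hp.1⟩
  have sw := integral_integral_swap hint
  rw [intervalIntegral.integral_of_le ht, intervalIntegral.integral_of_le ht]
  convert sw using 1
  · refine setIntegral_congr_fun measurableSet_Ioc fun s hs => ?_
    rw [intervalIntegral.integral_of_le (by linarith [hs.2])]
    have : ∀ τ, E.indicator (fun p => c p.2 • H p.2 p.1) (s, τ) =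
      (Iic (t - s)).indicator (fun τ => c τ • H τ s) τ := by
      intro τ
      simp only [indicator, E, mem_ofPred_eq, mem_Iic, le_sub_iff_add_le, add_comm]
    simp_rw [this]
    rw [setIntegral_indicator measurableSet_Iic]
    congr 2
    ext τ; simp only [mem_Ioc, mem_inter_iff, mem_Iic]
    constructor
    · rintro ⟨h1, h2⟩; exact ⟨⟨h1, by linarith [hs.1]⟩, h2⟩
    · rintro ⟨⟨h1, _⟩, h2⟩; exact ⟨h1, h2⟩
  · refine setIntegral_congr_fun measurableSet_Ioc fun τ hs => ?_
    rw [intervalIntegral.integral_of_le (by linarith [hs.2]), ← integral_smul]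
    have : ∀ s, E.indicator (fun p => c p.2 • H p.2 p.1) (s, τ) =
      (Iic (t - τ)).indicator (fun s => c τ • H τ s) s := by
      intro s
      simp only [indicator, E, mem_ofPred_eq, mem_Iic, le_sub_iff_add_le]
    simp_rw [this]
    rw [setIntegral_indicator measurableSet_Iic]
    congr 2
    ext σ; simp only [mem_Ioc, mem_inter_iff, mem_Iic]
    constructor
    · rintro ⟨h1, h2⟩; exact ⟨⟨h1, by linarith [hs.1]⟩, h2⟩
    · rintro ⟨⟨h1, _⟩, h2⟩; exact ⟨h1, h2⟩

/-- operator convolution -/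
noncomputable def oc (T : ℝ → X →L[ℂ] X) (f : ℝ → X) (t : ℝ) : X :=
  ∫ s in (0:ℝ)..t, T (t - s) (f s)

lemma oc_cont {T : ℝ → X →L[ℂ] X} (hT : Continuous fun p : ℝ × X => T p.1 p.2)
    {f : ℝ → X} (hf : Continuous f) : Continuous (oc T f) := by
  unfold oc
  apply intervalIntegral.continuous_parametric_intervalIntegral_of_continuous _ continuous_id
  exact hT.comp (by fun_prop : Continuous fun p : ℝ × ℝ => (p.1 - p.2, f p.2))

lemma cv_oc {T : ℝ → X →L[ℂ] X} (hT : Continuous fun p : ℝ × X => T p.1 p.2)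
    {f : ℝ → X} (hf : Continuous f) {b t : ℝ} (hb : 0 < b) (ht : 0 ≤ t) :
    ∫ s in (0:ℝ)..t, cv b (fun σ => T σ (f s)) (t - s) = cv b (oc T f) t := by
  simp_rw [cv_eq]
  have := tri ht (g_intervalIntegrable hb 0 t) (H := fun τ s => T (t - s - τ) (f s))
    (hT.comp (by fun_prop : Continuous fun p : ℝ × ℝ => (t - p.2 - p.1, f p.2)))
  rw [this]
  unfold oc
  simp_rw [sub_right_comm]
end

section
variable {X : Type*} [NormedAddCommGroup X] [NormedSpace ℂ X]

/-- derivative of the operator convolution for smooth functions -/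
noncomputable def kk (T : ℝ → X →L[ℂ] X) (f f' : ℝ → X) (t : ℝ) : X :=
  T t (f 0) + oc T f' t

lemma oc_eq (T : ℝ → X →L[ℂ] X) (f : ℝ → X) (t : ℝ) :
    oc T f t = ∫ s in (0:ℝ)..t, T s (f (t - s)) := by
  have := intervalIntegral.integral_comp_sub_left (a := 0) (b := t)
    (fun s => T s (f (t - s))) t
  simp only [sub_sub_cancel, sub_self, sub_zero] at this
  rw [← this, oc]

lemma oc_smooth [CompleteSpace X] {T : ℝ → X →L[ℂ] X}
    (hT : Continuous fun p : ℝ × X => T p.1 p.2)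
    {f f' : ℝ → X} (hf : ∀ t, HasDerivAt f (f' t) t) (hf' : Continuous f') {t : ℝ} (ht : 0 ≤ t) :
    cv 1 (kk T f f') t = oc T f t := by
  have hTc : ∀ x, Continuous fun s => T s x := fun x =>
    hT.comp (by fun_prop : Continuous fun s : ℝ => (s, x))
  have hTs : ∀ s, Continuous fun x => T s x := fun s => (T s).continuous
  have e1 : cv 1 (oc T f') t = ∫ s in (0:ℝ)..t, ∫ σ in (0:ℝ)..(t - s), T s (f' σ) := by
    rw [← cv_oc hT hf' one_pos ht]
    simp_rw [cv_one]
    have := tri ht (c := fun _ => 1) (by simp) (H := fun τ s => T τ (f' s))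
      (hT.comp (by fun_prop : Continuous fun p : ℝ × ℝ => (p.1, f' p.2)))
    simpa only [one_smul] using this
  rw [oc_eq, cv_one]
  unfold kk
  rw [intervalIntegral.integral_add ((hTc _).intervalIntegrable _ _)
    ((oc_cont hT hf').intervalIntegrable _ _), ← cv_one (oc T f'), e1,
    ← intervalIntegral.integral_add ((hTc _).intervalIntegrable _ _)]
  · apply intervalIntegral.integral_congr
    intro s _
    simp only
    have h2 : ∫ σ in (0:ℝ)..(t - s), f' σ = f (t - s) - f 0 :=
      intervalIntegral.integral_eq_sub_of_hasDerivAt (fun x _ => hf x)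
        (hf'.intervalIntegrable _ _)
    rw [(T s).intervalIntegral_comp_comm (hf'.intervalIntegrable _ _), h2, map_sub]
    abel
  · apply Continuous.intervalIntegrable
    apply intervalIntegral.continuous_parametric_intervalIntegral_of_continuous _ (by fun_prop)
    exact hT.comp (by fun_prop : Continuous fun p : ℝ × ℝ => (p.1, f' p.2))

lemma sv_partial {T : ℝ → X →L[ℂ] X} {r C : ℝ}
    (hC : ∀ (n : ℕ) (d : ℕ → ℝ) (x : ℕ → X),
      d 0 = 0 → d n = r → (∀ i < n, d i < d (i + 1)) → (∀ i, ‖x i‖ ≤ 1) →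
      ‖∑ i ∈ Finset.range n, (T (d (i + 1)) - T (d i)) (x i)‖ ≤ C)
    {n : ℕ} {d : ℕ → ℝ} {a : ℕ → X} {m : ℝ} (hm : 0 < m)
    (h0 : d 0 = 0) (hn : d n ≤ r) (hd : ∀ i < n, d i < d (i + 1)) (ha : ∀ i < n, ‖a i‖ ≤ m) :
    ‖∑ i ∈ Finset.range n, (T (d (i + 1)) - T (d i)) (a i)‖ ≤ C * m := by
  let x : ℕ → X := fun i => if i < n then (m : ℂ)⁻¹ • a i else 0
  have hx : ∀ i, ‖x i‖ ≤ 1 := by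
    intro i
    simp only [x]
    split_ifs with h
    · rw [norm_smul, norm_inv, Complex.norm_real, Real.norm_eq_abs, abs_of_pos hm,
        inv_mul_le_iff₀ hm]
      simpa using ha i h
    · simp
  have hs : ∑ i ∈ Finset.range n, (T (d (i + 1)) - T (d i)) (a i) =
      (m : ℂ) • ∑ i ∈ Finset.range n, (T (d (i + 1)) - T (d i)) (x i) := by
    rw [Finset.smul_sum]
    apply Finset.sum_congr rfl
    intro i hi
    have hm' : (m : ℂ) ≠ 0 := by exact_mod_cast hm.ne'
    simp only [x, if_pos (Finset.mem_range.1 hi), map_smul]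
    rw [smul_inv_smul₀ hm']
  have key : ‖∑ i ∈ Finset.range n, (T (d (i + 1)) - T (d i)) (x i)‖ ≤ C := by
    rcases hn.eq_or_lt with hn | hn
    · exact hC n d x h0 hn hd hx
    · have := hC (n + 1) (fun i => if i ≤ n then d i else r) x (by simp [h0]) (by simp)
        (by
          intro i hi
          rcases (Nat.lt_succ_iff.1 hi).eq_or_lt with rfl | hi'
          · simpa using hn
          · simp only [hi'.le, if_true, Nat.succ_le_of_lt hi']
            exact hd i hi') hx
      rw [Finset.sum_range_succ] at this
      have hxn : x n = 0 := by simp [x]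
      rw [hxn, map_zero, add_zero] at this
      convert this using 2
      apply Finset.sum_congr rfl
      intro i hi
      have hi := Finset.mem_range.1 hi
      simp only [hi.le, if_true, Nat.succ_le_of_lt hi]
  rw [hs, norm_smul, Complex.norm_real, Real.norm_eq_abs, abs_of_pos hm, mul_comm]
  gcongr

lemma abel_sum (U : ℕ → X →L[ℂ] X) (a : ℕ → X) (n : ℕ) :
    U n (a n) + ∑ i ∈ Finset.range n, U (i + 1) (a i - a (i + 1)) =
      U 0 (a 0) + ∑ i ∈ Finset.range n, (U (i + 1) - U i) (a i) := by
  induction n with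
  | zero => simp
  | succ n ih =>
    rw [Finset.sum_range_succ, Finset.sum_range_succ, ← add_assoc, ← add_assoc, ← ih]
    simp only [map_sub, sub_apply]
    abel

lemma kk_bound [CompleteSpace X] {T : ℝ → X →L[ℂ] X} (hT0 : T 0 = 1)
    (hT : Continuous fun p : ℝ × X => T p.1 p.2) {r C : ℝ}
    (hC : ∀ (n : ℕ) (d : ℕ → ℝ) (x : ℕ → X),
      d 0 = 0 → d n = r → (∀ i < n, d i < d (i + 1)) → (∀ i, ‖x i‖ ≤ 1) →
      ‖∑ i ∈ Finset.range n, (T (d (i + 1)) - T (d i)) (x i)‖ ≤ C)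
    {f f' : ℝ → X} (hf : ∀ t, HasDerivAt f (f' t) t) (hf' : Continuous f')
    {m : ℝ} (hm : 0 < m) (hfm : ∀ t ∈ Icc 0 r, ‖f t‖ ≤ m) {t : ℝ} (ht : t ∈ Icc 0 r) :
    ‖kk T f f' t‖ ≤ m + |C| * m := by
  have hr : 0 ≤ r := ht.1.trans ht.2
  rcases ht.1.eq_or_lt with rfl | ht0
  · have : kk T f f' 0 = f 0 := by simp [kk, oc, hT0]
    rw [this]
    have := hfm 0 ht
    have : 0 ≤ |C| * m := by positivity
    linarith
  have hΦ : Continuous fun p : ℝ × ℝ => T p.1 (f' (t - p.2)) :=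
    hT.comp (by fun_prop : Continuous fun p : ℝ × ℝ => (p.1, f' (t - p.2)))
  refine le_of_forall_pos_le_add fun ε hε => ?_
  have hu := (isCompact_Icc.prod isCompact_Icc).uniformContinuousOn_of_continuous
    (s := Icc 0 t ×ˢ Icc 0 t) hΦ.continuousOn
  obtain ⟨δ, hδ, hu⟩ := Metric.uniformContinuousOn_iff.1 hu (ε / t) (by positivity)
  obtain ⟨n, hn⟩ := exists_nat_gt (t / δ)
  have hn0 : (0:ℝ) < n := lt_trans (by positivity) hn
  have hnd : t / n < δ := by
    rw [div_lt_iff₀ hδ] at hn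
    rw [div_lt_iff₀ hn0]; linarith
  let d : ℕ → ℝ := fun i => i * (t / n)
  have hd1 : ∀ i, d (i + 1) = d i + t / n := by intro i; simp only [d]; push_cast; ring
  have htn : 0 < t / n := by positivity
  have hd0 : ∀ i, 0 ≤ d i := fun i => by simp only [d]; positivity
  have hdn : d n = t := by simp only [d]; field_simp
  have hdt : ∀ i ≤ n, d i ≤ t := by
    intro i hi
    rw [← hdn]
    simp only [d]
    gcongr
  have hTc : ∀ (s : ℝ), Continuous fun σ => T s (f' (t - σ)) := fun s =>
    hΦ.comp (by fun_prop : Continuous fun σ : ℝ => (s, σ))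
  have hTd : Continuous fun σ => T σ (f' (t - σ)) :=
    hΦ.comp (by fun_prop : Continuous fun σ : ℝ => (σ, σ))
  have e1 : oc T f' t = ∑ i ∈ Finset.range n, ∫ s in (d i)..(d (i + 1)), T s (f' (t - s)) := by
    rw [intervalIntegral.sum_integral_adjacent_intervals
      (fun i _ => hTd.intervalIntegrable _ _), oc_eq, hdn]
    simp [d]
  have e2 : ∀ i, T (d (i + 1)) (f (t - d i) - f (t - d (i + 1))) =
      ∫ s in (d i)..(d (i + 1)), T (d (i + 1)) (f' (t - s)) := by
    intro i
    rw [(T (d (i+1))).intervalIntegral_comp_comm (Continuous.intervalIntegrable (by fun_prop) _ _),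
      intervalIntegral.integral_comp_sub_left,
      intervalIntegral.integral_eq_sub_of_hasDerivAt (fun x _ => hf x)
        (hf'.intervalIntegrable _ _)]
  have e3 : ∀ i ∈ Finset.range n, ‖(∫ s in (d i)..(d (i + 1)), T s (f' (t - s))) -
      T (d (i + 1)) (f (t - d i) - f (t - d (i + 1)))‖ ≤ ε / t * (t / n) := by
    intro i hi
    have hi := Finset.mem_range.1 hi
    rw [e2, ← intervalIntegral.integral_sub (hTd.intervalIntegrable _ _)
      ((hTc _).intervalIntegrable _ _)]
    have := intervalIntegral.norm_integral_le_of_norm_le_const (a := d i) (b := d (i + 1))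
      (f := fun s => T s (f' (t - s)) - T (d (i + 1)) (f' (t - s))) (C := ε / t) (by
        intro s hs
        rw [uIoc_of_le (by rw [hd1]; linarith)] at hs
        have h1 := hd0 i
        have h2 := hdt (i + 1) hi
        have := hu (s, s) ⟨⟨by linarith [hs.1], by linarith [hs.2]⟩,
          ⟨by linarith [hs.1], by linarith [hs.2]⟩⟩ (d (i + 1), s)
          ⟨⟨hd0 _, h2⟩, ⟨by linarith [hs.1], by linarith [hs.2]⟩⟩ (by
            rw [Prod.dist_eq, dist_self, Real.dist_eq]
            simp only [abs_nonneg, sup_of_le_left]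
            rw [abs_lt]
            rw [hd1] at hs ⊢
            constructor <;> linarith [hs.1, hs.2])
        rw [dist_eq_norm] at this
        exact this.le)
    rw [hd1 i, add_sub_cancel_left, abs_of_pos htn] at this
    rw [hd1 i]
    exact this
  have e4 := abel_sum (fun i => T (d i)) (fun i => f (t - d i)) n
  have e5 := sv_partial hC (n := n) (d := d) (a := fun i => f (t - d i)) hm (by simp [d])
    (by rw [hdn]; exact ht.2) (fun i _ => by rw [hd1]; linarith)
    (fun i hi => hfm _ ⟨by linarith [hdt i hi.le], by linarith [hd0 i, ht.2]⟩)
  have hd00 : d 0 = 0 := by simp [d]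
  simp only [hdn, hd00, sub_self, sub_zero, hT0, one_apply_eq_self] at e4
  have e6 : kk T f f' t = (f t + ∑ i ∈ Finset.range n, (T (d (i + 1)) - T (d i)) (f (t - d i))) +
      ∑ i ∈ Finset.range n, ((∫ s in (d i)..(d (i + 1)), T s (f' (t - s))) -
      T (d (i + 1)) (f (t - d i) - f (t - d (i + 1)))) := by
    rw [← e4, Finset.sum_sub_distrib, ← e1, kk]
    abel
  rw [e6]
  have e7 := norm_sum_le_of_le _ e3
  rw [Finset.sum_const, Finset.card_range, nsmul_eq_mul] at e7
  have e8 : (n:ℝ) * (ε / t * (t / n)) = ε := by field_simp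
  rw [e8] at e7
  have e9 : C * m ≤ |C| * m := by gcongr; exact le_abs_self _
  have e10 := hfm t ht
  refine (norm_add_le _ _).trans ?_
  have := norm_add_le (f t) (∑ i ∈ Finset.range n, (T (d (i + 1)) - T (d i)) (f (t - d i)))
  linarith

lemma approx [CompleteSpace X] {r : ℝ} {f : ℝ → X} (hf : Continuous f) {ε : ℝ} (hε : 0 < ε) :
    ∃ p p' : ℝ → X, (∀ t, HasDerivAt p (p' t) t) ∧ Continuous p' ∧
      ∀ t ∈ Icc 0 r, ‖p t - f t‖ ≤ ε := by
  have hu := (isCompact_Icc (a := (0:ℝ)) (b := r + 1)).uniformContinuousOn_of_continuous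
    hf.continuousOn
  obtain ⟨δ, hδ, hu⟩ := Metric.uniformContinuousOn_iff.1 hu ε hε
  let h : ℝ := min (δ / 2) 1
  have h0 : 0 < h := by simp only [h]; positivity
  have h1 : h ≤ 1 := min_le_right _ _
  have h2 : h < δ := (min_le_left _ _).trans_lt (by linarith)
  have hG : ∀ t, HasDerivAt (fun t => ∫ s in (0:ℝ)..t, f s) (f t) t := fun t =>
    intervalIntegral.integral_hasDerivAt_right (hf.intervalIntegrable _ _)
      (hf.stronglyMeasurableAtFilter _ _) hf.continuousAt
  refine ⟨fun t => h⁻¹ • ((∫ s in (0:ℝ)..(t + h), f s) - ∫ s in (0:ℝ)..t, f s),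
    fun t => h⁻¹ • (f (t + h) - f t), fun t => ?_, by fun_prop, fun t ht => ?_⟩
  · exact ((HasDerivAt.comp_add_const t h (hG (t + h))).sub (hG t)).const_smul _
  · simp only
    rw [intervalIntegral.integral_interval_sub_left (hf.intervalIntegrable _ _)
      (hf.intervalIntegrable _ _)]
    have e : f t = h⁻¹ • ∫ s in t..(t + h), f t := by
      rw [intervalIntegral.integral_const, add_sub_cancel_left, inv_smul_smul₀ h0.ne']
    have e2 : h⁻¹ • (∫ s in t..(t + h), f s) - f t = h⁻¹ • ∫ s in t..(t + h), (f s - f t) := by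
      rw [intervalIntegral.integral_sub (hf.intervalIntegrable _ _) (by simp), smul_sub, ← e]
    rw [e2, norm_smul, norm_inv, Real.norm_eq_abs, abs_of_pos h0, inv_mul_le_iff₀ h0]
    have := intervalIntegral.norm_integral_le_of_norm_le_const (a := t) (b := t + h)
      (f := fun s => f s - f t) (C := ε) (by
        intro s hs
        rw [uIoc_of_le (by linarith)] at hs
        have := hu s ⟨by linarith [hs.1, ht.1], by linarith [hs.2, ht.2]⟩ t
          ⟨ht.1, by linarith [ht.2]⟩ (by
            rw [Real.dist_eq, abs_lt]; constructor <;> linarith [hs.1, hs.2])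
        rw [dist_eq_norm] at this
        exact this.le)
    rw [add_sub_cancel_left, abs_of_pos h0] at this
    linarith

lemma exists_k [CompleteSpace X] {T : ℝ → X →L[ℂ] X} (hT0 : T 0 = 1)
    (hT : Continuous fun p : ℝ × X => T p.1 p.2) {M : ℝ} (hM : ∀ s, ‖T s‖ ≤ M) {r C : ℝ}
    (hC : ∀ (n : ℕ) (d : ℕ → ℝ) (x : ℕ → X),
      d 0 = 0 → d n = r → (∀ i < n, d i < d (i + 1)) → (∀ i, ‖x i‖ ≤ 1) →
      ‖∑ i ∈ Finset.range n, (T (d (i + 1)) - T (d i)) (x i)‖ ≤ C)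
    {f : ℝ → X} (hf : Continuous f) :
    ∃ k : ℝ → X, ContinuousOn k (Icc 0 r) ∧ ∀ t ∈ Icc 0 r, oc T f t = cv 1 k t := by
  have hTc : ∀ x, Continuous fun s => T s x := fun x =>
    hT.comp (by fun_prop : Continuous fun s : ℝ => (s, x))
  have hM0 : 0 ≤ M := (norm_nonneg _).trans (hM 0)
  choose p p' hp hp' hpf using fun n : ℕ =>
    approx (r := r) hf (Nat.one_div_pos_of_nat (n := n) (α := ℝ))
  have hkc : ∀ n, Continuous (kk T (p n) (p' n)) := fun n => (hTc _).add (oc_cont hT (hp' n))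
  have hpc : ∀ n, Continuous (p n) := fun n =>
    continuous_iff_continuousAt.2 fun t => (hp n t).continuousAt
  have hdiff : ∀ n j t, t ∈ Icc 0 r → ‖kk T (p n) (p' n) t - kk T (p j) (p' j) t‖ ≤
      (1 + |C|) * (1 / ((n:ℝ) + 1) + 1 / ((j:ℝ) + 1)) := by
    intro n j t ht
    have e : kk T (p n) (p' n) t - kk T (p j) (p' j) t =
        kk T (fun s => p n s - p j s) (fun s => p' n s - p' j s) t := by
      have : oc T (fun s => p' n s - p' j s) t = oc T (p' n) t - oc T (p' j) t := by
        unfold oc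
        rw [← intervalIntegral.integral_sub]
        · simp only [map_sub]
        · have := hp' n
          exact (hT.comp (by fun_prop : Continuous fun s : ℝ => (t - s, p' n s))).intervalIntegrable _ _
        · have := hp' j
          exact (hT.comp (by fun_prop : Continuous fun s : ℝ => (t - s, p' j s))).intervalIntegrable _ _
      simp only [kk, this, map_sub]
      abel
    rw [e]
    have := kk_bound hT0 hT hC (f := fun s => p n s - p j s) (f' := fun s => p' n s - p' j s)
      (fun t => (hp n t).sub (hp j t)) ((hp' n).sub (hp' j))
      (m := 1 / ((n:ℝ) + 1) + 1 / ((j:ℝ) + 1)) (by positivity) (fun t ht => by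
        have e : p n t - p j t = (p n t - f t) - (p j t - f t) := by abel
        rw [e]
        exact (norm_sub_le _ _).trans (add_le_add (hpf n t ht) (hpf j t ht))) ht
    linarith
  have hz : Tendsto (fun n : ℕ => 1 / ((n:ℝ) + 1)) atTop (𝓝 0) :=
    tendsto_one_div_add_atTop_nhds_zero_nat
  have hCau : UniformCauchySeqOn (fun n => kk T (p n) (p' n)) atTop (Icc 0 r) := by
    rw [Metric.uniformCauchySeqOn_iff]
    intro ε hε
    have hpos : 0 < ε / (2 * (1 + |C|)) := by positivity
    obtain ⟨N, hN⟩ := eventually_atTop.1 (hz.eventually (gt_mem_nhds hpos))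
    refine ⟨N, fun n hn j hj t ht => ?_⟩
    rw [dist_eq_norm]
    refine (hdiff n j t ht).trans_lt ?_
    have h1 := hN n hn
    have h2 := hN j hj
    calc (1 + |C|) * (1 / ((n:ℝ) + 1) + 1 / ((j:ℝ) + 1))
        < (1 + |C|) * (ε / (2 * (1 + |C|)) + ε / (2 * (1 + |C|))) := by gcongr
      _ = ε := by field_simp; ring
  have hlim : ∀ t, ∃ l, t ∈ Icc 0 r → Tendsto (fun n => kk T (p n) (p' n) t) atTop (𝓝 l) := by
    intro t
    by_cases ht : t ∈ Icc 0 r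
    · obtain ⟨l, hl⟩ := cauchySeq_tendsto_of_complete (hCau.cauchySeq ht)
      exact ⟨l, fun _ => hl⟩
    · exact ⟨0, fun h => absurd h ht⟩
  choose k hk using hlim
  have hunif := hCau.tendstoUniformlyOn_of_tendsto hk
  refine ⟨k, hunif.continuousOn (Frequently.of_forall fun n => (hkc n).continuousOn), ?_⟩
  intro t ht
  have hsub : uIcc 0 t ⊆ Icc 0 r := by
    rw [uIcc_of_le ht.1]; exact Icc_subset_Icc_right ht.2
  have l1 : Tendsto (fun n => cv 1 (kk T (p n) (p' n)) t) atTop (𝓝 (cv 1 k t)) := by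
    simp_rw [cv_one]
    exact (hunif.mono hsub).tendsto_intervalIntegral_of_continuousOn
      (Eventually.of_forall fun n => (hkc n).continuousOn)
  have l2 : Tendsto (fun n => oc T (p n) t) atTop (𝓝 (oc T f t)) := by
    unfold oc
    refine TendstoUniformlyOn.tendsto_intervalIntegral_of_continuousOn
      (Eventually.of_forall fun n => ?_) ?_
    · have := hpc n
      exact (hT.comp (by fun_prop : Continuous fun s : ℝ => (t - s, p n s))).continuousOn
    · rw [Metric.tendstoUniformlyOn_iff]
      intro ε hε
      have hpos : 0 < ε / (M + 1) := by positivity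
      filter_upwards [hz.eventually (gt_mem_nhds hpos)] with n hn s hs
      rw [dist_eq_norm, ← map_sub, ← norm_neg, ← map_neg, neg_sub]
      have := hpf n s (hsub hs)
      calc ‖T (t - s) (p n s - f s)‖ ≤ M * (1 / ((n:ℝ) + 1)) :=
            (T (t - s)).le_of_opNorm_le_of_le (hM _) this
        _ ≤ (M + 1) * (1 / ((n:ℝ) + 1)) := by gcongr; linarith
        _ < (M + 1) * (ε / (M + 1)) := by gcongr
        _ = ε := by field_simp
  refine tendsto_nhds_unique l2 (l1.congr fun n => ?_)
  exact oc_smooth hT (hp n) (hp' n) ht.1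
end

section
variable {X : Type*} [NormedAddCommGroup X] [NormedSpace ℂ X]

lemma cv_int {b t : ℝ} (hb : 0 < b) {φ : ℝ → X} (ht : 0 ≤ t) (hφ : ContinuousOn φ (Icc 0 t)) :
    IntervalIntegrable (fun s => g b (t - s) • φ s) volume 0 t := by
  have h1 : IntervalIntegrable (fun s => g b (t - s)) volume 0 t := by
    have := (g_intervalIntegrable hb t 0).comp_sub_left t
    simpa using this
  apply h1.smul_continuousOn
  rwa [uIcc_of_le ht]

lemma cv_add {b t r : ℝ} (hb : 0 < b) {φ ψ : ℝ → X} (ht : t ∈ Icc 0 r)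
    (hφ : ContinuousOn φ (Icc 0 r)) (hψ : ContinuousOn ψ (Icc 0 r)) :
    cv b (fun s => φ s + ψ s) t = cv b φ t + cv b ψ t := by
  have hs : Icc 0 t ⊆ Icc 0 r := Icc_subset_Icc_right ht.2
  unfold cv
  rw [← intervalIntegral.integral_add (cv_int hb ht.1 (hφ.mono hs)) (cv_int hb ht.1 (hψ.mono hs))]
  simp_rw [smul_add]

lemma cv_map [CompleteSpace X] {Q : Type*} [NormedAddCommGroup Q] [NormedSpace ℂ Q]
    [CompleteSpace Q] (L : X →L[ℂ] Q)
    {b t : ℝ} (hb : 0 < b) {φ : ℝ → X} (ht : 0 ≤ t) (hφ : ContinuousOn φ (Icc 0 t)) :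
    L (cv b φ t) = cv b (fun s => L (φ s)) t := by
  unfold cv
  rw [← L.intervalIntegral_comp_comm (cv_int hb ht hφ)]
  congr 1 with s
  exact L.map_smul_of_tower _ _

lemma graph_maps.{u} {X : Type u} [NormedAddCommGroup X] [NormedSpace ℂ X] [CompleteSpace X]
    (G : Submodule ℂ (X × X)) (hG : IsClosed (G : Set (X × X))) :
    ∃ (Q : Type u) (_ : NormedAddCommGroup Q) (_ : NormedSpace ℂ Q) (_ : CompleteSpace Q)
      (L₁ L₂ : X →L[ℂ] Q),
      ∀ x y, (x, y) ∈ G ↔ L₁ x = L₂ y := by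
  have := hG
  refine ⟨(X × X) ⧸ G, inferInstance, inferInstance, inferInstance,
    G.mkQL.comp (ContinuousLinearMap.inl ℂ X X), -(G.mkQL.comp (ContinuousLinearMap.inr ℂ X X)), ?_⟩
  intro x y
  rw [← Submodule.Quotient.mk_eq_zero]
  have : (x, y) = (x, 0) + (0, y) := by simp
  rw [this, Submodule.Quotient.mk_add, ← sub_eq_zero (a := (G.mkQL.comp _) x)]
  simp

lemma g_continuous {a : ℝ} (ha : 1 < a) : Continuous (g a) := by
  unfold g
  exact (Real.continuous_rpow_const (by linarith)).div_const _

lemma T_props [CompleteSpace X] {S : ℝ → X →L[ℂ] X} {r : ℝ} (hr : 0 ≤ r)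
    (hS_cont : ∀ x : X, ContinuousOn (fun t => S t x) (Ici (0:ℝ))) :
    (∃ M, ∀ s, ‖S (max 0 (min r s))‖ ≤ M) ∧
    Continuous fun p : ℝ × X => S (max 0 (min r p.1)) p.2 := by
  have hc : ∀ x, Continuous fun s => S (max 0 (min r s)) x := fun x =>
    xt_cont hr ((hS_cont x).mono Icc_subset_Ici_self)
  obtain ⟨M, hM⟩ : ∃ M, ∀ s, ‖S (max 0 (min r s))‖ ≤ M := by
    apply banach_steinhaus
    intro x
    exact xt_bdd hr ((hS_cont x).mono Icc_subset_Ici_self)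
  refine ⟨⟨M, hM⟩, continuous_iff_continuousAt.2 ?_⟩
  rintro ⟨s₀, x₀⟩
  rw [ContinuousAt, tendsto_iff_norm_sub_tendsto_zero]
  have hb : ∀ p : ℝ × X, ‖S (max 0 (min r p.1)) p.2 - S (max 0 (min r s₀)) x₀‖ ≤
      M * ‖p.2 - x₀‖ + ‖S (max 0 (min r p.1)) x₀ - S (max 0 (min r s₀)) x₀‖ := by
    intro p
    have : S (max 0 (min r p.1)) p.2 - S (max 0 (min r s₀)) x₀ =
      S (max 0 (min r p.1)) (p.2 - x₀) + (S (max 0 (min r p.1)) x₀ - S (max 0 (min r s₀)) x₀) := by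
      rw [map_sub]; abel
    rw [this]
    refine (norm_add_le _ _).trans ?_
    gcongr
    exact (S _).le_of_opNorm_le (hM _) _
  refine squeeze_zero (fun _ => norm_nonneg _) hb ?_
  have : Continuous fun p : ℝ × X => M * ‖p.2 - x₀‖ +
      ‖S (max 0 (min r p.1)) x₀ - S (max 0 (min r s₀)) x₀‖ := by
    exact (continuous_const.mul ((continuous_snd.sub continuous_const).norm)).add
      ((((hc x₀).comp continuous_fst).sub continuous_const).norm)
  simpa using this.tendsto (s₀, x₀)

lemma T_sv {S : ℝ → X →L[ℂ] X} {r : ℝ} (hsv : BoundedSemivariation S r) :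
    ∃ C : ℝ, ∀ (n : ℕ) (d : ℕ → ℝ) (x : ℕ → X),
      d 0 = 0 → d n = r → (∀ i < n, d i < d (i + 1)) → (∀ i, ‖x i‖ ≤ 1) →
      ‖∑ i ∈ Finset.range n,
        (S (max 0 (min r (d (i + 1)))) - S (max 0 (min r (d i)))) (x i)‖ ≤ C := by
  obtain ⟨C, hC⟩ := hsv
  refine ⟨C, fun n d x h0 hn hd hx => ?_⟩
  have h1 : ∀ i ≤ n, 0 ≤ d i := by
    intro i
    induction i with
    | zero => intro _; exact h0.ge
    | succ i ih => intro hi; exact (ih (by omega)).trans (hd i (by omega)).le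
  have h2 : ∀ j ≤ n, d (n - j) ≤ r := by
    intro j
    induction j with
    | zero => intro _; exact hn.le
    | succ j ih =>
      intro hj
      have := hd (n - (j + 1)) (by omega)
      rw [show n - (j + 1) + 1 = n - j by omega] at this
      exact this.le.trans (ih (by omega))
  have h3 : ∀ i ≤ n, max 0 (min r (d i)) = d i := by
    intro i hi
    have := h2 (n - i) (by omega)
    rw [show n - (n - i) = i by omega] at this
    rw [min_eq_right this, max_eq_right (h1 i hi)]
  refine le_trans (le_of_eq ?_) (hC n d x h0 hn hd hx)
  congr 1
  refine Finset.sum_congr rfl fun i hi => ?_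
  have hi := Finset.mem_range.1 hi
  rw [h3 i hi.le, h3 (i + 1) hi]
end

end Helpers

theorem stmt_14
    {X : Type*} [NormedAddCommGroup X] [NormedSpace ℂ X] [CompleteSpace X]
    (α : ℝ) (hα1 : 1 < α) (hα2 : α < 2)
    (A : X →ₗ.[ℂ] X) (hA_closed : IsClosed (A.graph : Set (X × X)))
    (hA_dense : Dense (A.domain : Set X))
    (S : ℝ → X →L[ℂ] X)
    (hS_cont : ∀ x : X, ContinuousOn (fun t => S t x) (Ici (0:ℝ)))
    (hS_zero : S 0 = 1)
    (hS_dom : ∀ t : ℝ, 0 ≤ t → ∀ x ∈ A.domain, S t x ∈ A.domain)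
    (hS_comm : ∀ t : ℝ, 0 ≤ t → ∀ x y : X, (x, y) ∈ A.graph → (S t x, S t y) ∈ A.graph)
    (hS_eq : ∀ t : ℝ, 0 ≤ t → ∀ x y : X, (x, y) ∈ A.graph →
      S t x = x + ∫ s in (0:ℝ)..t, g α (t - s) • S s y)
    (r : ℝ) (hr : 0 < r) (hsv : BoundedSemivariation S r) :
    ∀ x ∈ A.domain, ∀ y ∈ A.domain, ∀ f : ℝ → X, ContinuousOn f (Icc 0 r) →
      IsStrongSolution α A r f x y
        (fun t => S t x + (∫ s in (0:ℝ)..t, S s y) +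
          ∫ s in (0:ℝ)..t, Pa α S (t - s) (f s)) := by
  intro x hx y hy f hf
  obtain ⟨Q, _, _, _, L₁, L₂, hL⟩ := graph_maps A.graph hA_closed
  obtain ⟨⟨M, hM⟩, hT⟩ := T_props hr.le hS_cont
  obtain ⟨C, hC⟩ := T_sv hsv
  have hTS : ∀ s ∈ Icc 0 r, S (max 0 (min r s)) = S s := fun s hs => by
    rw [min_eq_right hs.2, max_eq_right hs.1]
  obtain ⟨T, hTdef⟩ : ∃ T : ℝ → X →L[ℂ] X, T = fun s => S (max 0 (min r s)) := ⟨_, rfl⟩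
  have hTS' : ∀ s ∈ Icc 0 r, T s = S s := fun s hs => by rw [hTdef]; exact hTS s hs
  replace hM : ∀ s, ‖T s‖ ≤ M := fun s => by rw [hTdef]; exact hM s
  replace hT : Continuous fun p : ℝ × X => T p.1 p.2 := by rw [hTdef]; exact hT
  have hC' : ∀ (n : ℕ) (d : ℕ → ℝ) (x : ℕ → X),
      d 0 = 0 → d n = r → (∀ i < n, d i < d (i + 1)) → (∀ i, ‖x i‖ ≤ 1) →
      ‖∑ i ∈ Finset.range n, (T (d (i + 1)) - T (d i)) (x i)‖ ≤ C := by
    rw [hTdef]; exact hC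
  clear hTS hC hTdef
  have hα0 : 0 < α := by linarith
  have hα3 : 0 < α - 1 := by linarith
  have hα4 : 0 < 2 - α := by linarith
  have h0r : (0:ℝ) ∈ Icc 0 r := ⟨le_rfl, hr.le⟩
  have hT0 : T 0 = 1 := by rw [hTS' 0 h0r, hS_zero]
  have hTc : ∀ z, Continuous fun s => T s z := fun z =>
    hT.comp (by fun_prop : Continuous fun s : ℝ => (s, z))
  have hF := xt_cont hr.le hf
  have hFf : ∀ t ∈ Icc 0 r, xt r f t = f t := fun t ht => xt_eq f ht
  generalize xt r f = F at hF hFf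
  obtain ⟨k, hkc, hk⟩ := exists_k hT0 hT hM hC' hF
  have hsub : ∀ {t}, t ∈ Icc 0 r → Icc 0 t ⊆ Icc 0 r := fun ht => Icc_subset_Icc_right ht.2
  have hres : ∀ z z', (z, z') ∈ A.graph → ∀ t ∈ Icc 0 r,
      S t z = z + cv α (fun s => T s z') t := by
    intro z z' hz t ht
    rw [hS_eq t ht.1 z z' hz]
    congr 1
    exact cv_congr ht.1 fun s hs => by rw [hTS' s (hsub ht hs)]
  have hgc := g_continuous hα1
  -- resolvent identity on all of X
  have hall : ∀ t ∈ Icc 0 r, ∀ z, L₁ (cv α (fun s => T s z) t) = L₂ (T t z - z) := by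
    intro t ht
    have hcl : IsClosed {z | L₁ (cv α (fun s => T s z) t) = L₂ (T t z - z)} := by
      apply isClosed_eq
      · apply L₁.continuous.comp
        unfold cv
        apply intervalIntegral.continuous_parametric_intervalIntegral_of_continuous'
        have h1 : Continuous fun p : X × ℝ => T p.2 p.1 :=
          hT.comp (by fun_prop : Continuous fun p : X × ℝ => (p.2, p.1))
        exact (hgc.comp (by fun_prop : Continuous fun p : X × ℝ => t - p.2)).smul h1
      · fun_prop
    have hd : (A.domain : Set X) ⊆ {z | L₁ (cv α (fun s => T s z) t) = L₂ (T t z - z)} := by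
      intro z hz
      have hg : (z, A ⟨z, hz⟩) ∈ A.graph := A.mem_graph ⟨z, hz⟩
      have e := hres _ _ hg t ht
      change L₁ (cv α (fun s => T s z) t) = L₂ (T t z - z)
      rw [hTS' t ht, e, add_sub_cancel_left, cv_map L₁ hα0 ht.1 (hTc _).continuousOn,
        cv_map L₂ hα0 ht.1 (hTc _).continuousOn]
      refine cv_congr ht.1 fun s hs => ?_
      rw [hTS' s (hsub ht hs)]
      exact (hL _ _).1 (hS_comm s hs.1 _ _ hg)
    intro z
    have := hcl.closure_subset_iff.2 hd
    rw [hA_dense.closure_eq] at this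
    exact this (mem_univ z)
  have hFc : ContinuousOn F (Icc 0 r) := hF.continuousOn
  have hcvk : ContinuousOn (cv α k) (Icc 0 r) := cv_contOn hα0 hr.le hkc
  -- integrated equation
  have hint : ∀ t ∈ Icc 0 r, L₁ (cv 1 (cv α k) t) = L₂ (cv 1 k t - cv 1 F t) := by
    intro t ht
    have e1 : cv α (oc T F) t = cv 1 (cv α k) t := by
      rw [cv_cv one_pos hα0 hkc ht, add_comm, ← cv_cv hα0 one_pos hkc ht]
      exact cv_congr ht.1 fun s hs => hk s (hsub ht hs)
    rw [← e1, ← cv_oc hT hF hα0 ht.1, ← hk t ht, cv_one F, oc,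
      ← intervalIntegral.integral_sub, ← L₁.intervalIntegral_comp_comm,
      ← L₂.intervalIntegral_comp_comm]
    · apply intervalIntegral.integral_congr
      intro s hs
      rw [uIcc_of_le ht.1] at hs
      exact hall (t - s) ⟨by linarith [hs.2], by linarith [hs.1, ht.2]⟩ (F s)
    · apply Continuous.intervalIntegrable
      exact (hT.comp (by fun_prop : Continuous fun s : ℝ => (t - s, F s))).sub hF
    · apply Continuous.intervalIntegrable
      unfold cv
      apply intervalIntegral.continuous_parametric_intervalIntegral_of_continuous _ (by fun_prop)
      exact (hgc.comp (by fun_prop : Continuous fun p : ℝ × ℝ => t - p.1 - p.2)).smul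
        (hT.comp (by fun_prop : Continuous fun p : ℝ × ℝ => (p.2, F p.1)))
    · exact (hT.comp (by fun_prop : Continuous fun s : ℝ => (t - s, F s))).intervalIntegrable _ _
    · exact hF.intervalIntegrable _ _
  have hv : ∀ t ∈ Icc 0 r, L₁ (cv α k t) = L₂ (k t - F t) := by
    intro t ht
    have d1 := (L₁.restrictScalars ℝ).hasFDerivAt.comp_hasDerivWithinAt t
      (cv_one_deriv hcvk ht)
    have d2 := (L₂.restrictScalars ℝ).hasFDerivAt.comp_hasDerivWithinAt t
      ((cv_one_deriv hkc ht).sub (cv_one_deriv hFc ht))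
    have d3 := d2.congr (f₁ := (L₁.restrictScalars ℝ) ∘ cv 1 (cv α k)) (fun s hs => hint s hs)
      (hint t ht)
    exact (uniqueDiffOn_Icc hr t ht).eq_deriv _ d1 d3
  have hveq : ∀ t ∈ Icc 0 r, ∫ s in (0:ℝ)..t, Pa α S (t - s) (f s) = cv α k t := by
    intro t ht
    have e2 : cv α k t = cv (α - 1) (cv 1 k) t := by
      rw [cv_cv hα3 one_pos hkc ht]; congr 1; ring
    have e3 : cv (α - 1) (cv 1 k) t = cv (α - 1) (oc T F) t :=
      cv_congr ht.1 fun s hs => (hk s (hsub ht hs)).symm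
    rw [e2, e3, ← cv_oc hT hF hα3 ht.1]
    apply intervalIntegral.integral_congr
    intro s hs
    rw [uIcc_of_le ht.1] at hs
    have hs' : t - s ∈ Icc 0 r := ⟨by linarith [hs.2], by linarith [hs.1, ht.2]⟩
    change cv (α - 1) (fun σ => S σ (f s)) (t - s) = _
    refine cv_congr hs'.1 fun σ hσ => ?_
    rw [hTS' σ (hsub hs' hσ), hFf s (hsub ht hs)]
  have hgx : (x, A ⟨x, hx⟩) ∈ A.graph := A.mem_graph ⟨x, hx⟩
  have hgy : (y, A ⟨y, hy⟩) ∈ A.graph := A.mem_graph ⟨y, hy⟩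
  generalize A ⟨x, hx⟩ = x' at hgx
  generalize A ⟨y, hy⟩ = y' at hgy
  have c1 : ContinuousOn (fun s => T s x') (Icc 0 r) := (hTc x').continuousOn
  have c2 : ContinuousOn (fun s => T s y') (Icc 0 r) := (hTc y').continuousOn
  have c3 : ContinuousOn (cv 1 fun s => T s y') (Icc 0 r) := cv_contOn one_pos hr.le c2
  obtain ⟨ψ, hψ⟩ : ∃ ψ : ℝ → X, ψ = fun s => T s x' + cv 1 (fun s => T s y') s + k s := ⟨_, rfl⟩
  have hψc : ContinuousOn ψ (Icc 0 r) := by rw [hψ]; exact (c1.add c3).add hkc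
  have hSy : ∀ t ∈ Icc 0 r, ∫ s in (0:ℝ)..t, S s y = cv 1 (fun s => T s y) t := by
    intro t ht
    rw [← cv_one]
    exact cv_congr ht.1 fun s hs => by rw [hTS' s (hsub ht hs)]
  have hu : ∀ t ∈ Icc 0 r, S t x + (∫ s in (0:ℝ)..t, S s y) +
      (∫ s in (0:ℝ)..t, Pa α S (t - s) (f s)) = x + t • y + cv α ψ t := by
    intro t ht
    have e1 : cv α ψ t = cv α (fun s => T s x') t + cv α (cv 1 fun s => T s y') t + cv α k t := by
      rw [hψ, cv_add (φ := fun s => T s x' + cv 1 (fun s => T s y') s) hα0 ht (c1.add c3) hkc,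
        cv_add (φ := fun s => T s x') (ψ := cv 1 fun s => T s y') hα0 ht c1 c3]
    have e2 : cv 1 (fun s => T s y) t = t • y + cv α (cv 1 fun s => T s y') t := by
      rw [cv_cv hα0 one_pos c2 ht, add_comm α 1, ← cv_cv one_pos hα0 c2 ht]
      have : t • y = cv 1 (fun _ => y) t := by simp [cv_one]
      rw [this, ← cv_add one_pos ht continuousOn_const (cv_contOn hα0 hr.le c2)]
      refine cv_congr ht.1 fun s hs => ?_
      rw [hTS' s (hsub ht hs), hres y y' hgy s (hsub ht hs)]
    rw [hveq t ht, hSy t ht, e1, e2, hres x x' hgx t ht]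
    abel
  have hcαψ : ContinuousOn (cv α ψ) (Icc 0 r) := cv_contOn hα0 hr.le hψc
  have hcαψ1 : ContinuousOn (cv (α - 1) ψ) (Icc 0 r) := cv_contOn hα3 hr.le hψc
  have hψ1 : ContinuousOn (cv 1 ψ) (Icc 0 r) := cv_contOn one_pos hr.le hψc
  have hcv0 : ∀ b (φ : ℝ → X), cv b φ 0 = 0 := fun b φ => by simp [cv]
  have hαeq : ∀ t ∈ Icc 0 r, cv α ψ t = cv 1 (cv (α - 1) ψ) t := by
    intro t ht
    rw [cv_cv one_pos hα3 hψc ht]; congr 1; ring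
  have hw : ∀ t ∈ Icc 0 r, (∫ s in (0:ℝ)..t, g (2 - α) (t - s) •
      (S s x + (∫ s' in (0:ℝ)..s, S s' y) +
      (∫ s' in (0:ℝ)..s, Pa α S (s - s') (f s')) - x - s • y)) = cv 1 (cv 1 ψ) t := by
    intro t ht
    have e1 : cv 1 (cv 1 ψ) t = cv (2 - α) (cv α ψ) t := by
      rw [cv_cv one_pos one_pos hψc ht, cv_cv hα4 hα0 hψc ht]; congr 1; ring
    rw [e1]
    refine cv_congr (φ := fun s => S s x + (∫ s' in (0:ℝ)..s, S s' y) +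
      (∫ s' in (0:ℝ)..s, Pa α S (s - s') (f s')) - x - s • y) ht.1 fun s hs => ?_
    rw [hu s (hsub ht hs)]
    abel
  refine ⟨fun t => ψ t - f t, fun t => y + cv (α - 1) ψ t, cv 1 ψ, ψ, ?_, ?_, hψc.sub hf, ?_,
    continuousOn_const.add hcαψ1, ?_, ?_, hψc, ?_, ?_, ?_⟩
  · refine ContinuousOn.congr (f := fun t : ℝ => x + t • y + cv α ψ t) ?_ hu
    have : Continuous fun t : ℝ => x + t • y := by fun_prop
    exact this.continuousOn.add hcαψ
  · intro t ht
    simp only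
    rw [hL, hveq t ht, hSy t ht, hψ]
    have e1 : L₁ (S t x) = L₂ (T t x') := by
      rw [hTS' t ht]; exact (hL _ _).1 (hS_comm t ht.1 _ _ hgx)
    have e2 : L₁ (cv 1 (fun s => T s y) t) = L₂ (cv 1 (fun s => T s y') t) := by
      rw [cv_map L₁ one_pos ht.1 (hTc _).continuousOn,
        cv_map L₂ one_pos ht.1 (hTc _).continuousOn]
      refine cv_congr ht.1 fun s hs => ?_
      rw [hTS' s (hsub ht hs)]
      exact (hL _ _).1 (hS_comm s hs.1 _ _ hgy)
    have e3 := hv t ht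
    rw [hFf t ht] at e3
    rw [map_add, map_add, e1, e2, e3, ← map_add, ← map_add]
    congr 1
    exact (add_sub_assoc _ _ _).symm
  · intro t ht
    have d1 : HasDerivWithinAt (fun t : ℝ => x + t • y) y (Icc 0 r) t := by
      have := ((hasDerivAt_id t).smul_const y).const_add x
      simpa using this.hasDerivWithinAt
    have d2 := d1.add (cv_one_deriv hcαψ1 ht)
    refine d2.congr (fun s hs => ?_) ?_
    · rw [hu s hs, hαeq s hs]; rfl
    · rw [hu t ht, hαeq t ht]; rfl
  · intro t ht
    exact (cv_one_deriv hψ1 ht).congr hw (hw t ht)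
  · intro t ht
    exact cv_one_deriv hψc ht
  · intro t ht
    simp
  · simp [hS_zero]
  · simp [hcv0]
end

section
/- Let A generate an α-times resolvent family {S_α(t)}_{t≥0} on X, where 1 < α < 2, and let r > 0. If for every x, y ∈ D(A) and every continuous f : [0,r] → X, the function u(t) = S_α(t)x + ∫_0^t S_α(s)y ds + (P_α*f)(t) is a strong solution of D_t^α u = Au + f on [0,r] with u(0) = x, u'(0) = y, then S_α(·) is of bounded semivariation on [0,r]. -/
open MeasureTheory Set

section Conv
variable {X : Type*} [NormedAddCommGroup X] [NormedSpace ℂ X]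

lemma conv_int {k : ℝ → ℝ} {r t : ℝ} (hk : IntervalIntegrable k volume 0 r)
    (ht : t ∈ Icc 0 r) {h : ℝ → X} (hh : Continuous h) :
    IntervalIntegrable (fun s => k (t - s) • h s) volume 0 t := by
  have h1 : IntervalIntegrable k volume 0 t := by
    apply hk.mono_set
    rw [uIcc_of_le ht.1, uIcc_of_le (ht.1.trans ht.2)]
    exact Icc_subset_Icc le_rfl ht.2
  have h2 := (h1.comp_sub_left t).symm
  simp only [sub_self, sub_zero] at h2
  exact h2.smul_continuousOn hh.continuousOn

lemma conv_bound {k : ℝ → ℝ} {r t : ℝ} (hk : IntervalIntegrable k volume 0 r)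
    (ht : t ∈ Icc 0 r) {h : ℝ → X} {B : ℝ} (hB : ∀ s, ‖h s‖ ≤ B) :
    ‖∫ s in (0:ℝ)..t, k (t - s) • h s‖ ≤ (∫ s in (0:ℝ)..r, ‖k s‖) * B := by
  have hB0 : 0 ≤ B := (norm_nonneg _).trans (hB 0)
  have h1 : IntervalIntegrable k volume 0 t := by
    apply hk.mono_set
    rw [uIcc_of_le ht.1, uIcc_of_le (ht.1.trans ht.2)]
    exact Icc_subset_Icc le_rfl ht.2
  have h2 := (h1.comp_sub_left t).symm
  simp only [sub_self, sub_zero] at h2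
  calc ‖∫ s in (0:ℝ)..t, k (t - s) • h s‖ ≤ ∫ s in (0:ℝ)..t, ‖k (t - s)‖ * B := by
        apply intervalIntegral.norm_integral_le_of_norm_le ht.1
        · filter_upwards with s _
          rw [norm_smul]
          exact mul_le_mul_of_nonneg_left (hB s) (norm_nonneg _)
        · exact h2.norm.mul_const B
    _ = (∫ s in (0:ℝ)..t, ‖k s‖) * B := by
        rw [intervalIntegral.integral_mul_const,
          intervalIntegral.integral_comp_sub_left (fun s => ‖k s‖) t]
        simp
    _ ≤ _ := by
        apply mul_le_mul_of_nonneg_right _ hB0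
        apply intervalIntegral.integral_mono_interval le_rfl ht.1 ht.2 _ hk.norm
        filter_upwards with s
        exact norm_nonneg _

lemma conv_cont [CompleteSpace X] {k : ℝ → ℝ} {r : ℝ} (hr : 0 < r) (hk : IntervalIntegrable k volume 0 r)
    {h : ℝ → X} (hh : Continuous h) {B : ℝ} (hB : ∀ s, ‖h s‖ ≤ B)
    (h0 : ∀ s ≤ 0, h s = h 0) :
    ContinuousOn (fun t => ∫ s in (0:ℝ)..t, k (t - s) • h s) (Icc 0 r) := by
  have key : ∀ t ∈ Icc 0 r, (∫ s in (0:ℝ)..t, k (t - s) • h s)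
      = (∫ s in (0:ℝ)..r, k s • h (t - s)) -
        ((∫ s in (0:ℝ)..r, k s) - ∫ s in (0:ℝ)..t, k s) • h 0 := by
    intro t ht
    have h1 : IntervalIntegrable k volume 0 t := by
      apply hk.mono_set
      rw [uIcc_of_le ht.1, uIcc_of_le (ht.1.trans ht.2)]
      exact Icc_subset_Icc le_rfl ht.2
    have h1' : IntervalIntegrable k volume t r := by
      apply hk.mono_set
      rw [uIcc_of_le ht.2, uIcc_of_le (ht.1.trans ht.2)]
      exact Icc_subset_Icc ht.1 le_rfl
    have e1 : (∫ s in (0:ℝ)..t, k (t - s) • h s) = ∫ s in (0:ℝ)..t, k s • h (t - s) := by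
      have := intervalIntegral.integral_comp_sub_left (a := 0) (b := t)
        (fun s => k s • h (t - s)) t
      simpa using this
    have hc : Continuous (fun s => h (t - s)) := by fun_prop
    have e2 := intervalIntegral.integral_add_adjacent_intervals
      (h1.smul_continuousOn hc.continuousOn) (h1'.smul_continuousOn hc.continuousOn)
    have e3 : (∫ s in t..r, k s • h (t - s)) = (∫ s in t..r, k s) • h 0 := by
      rw [← intervalIntegral.integral_smul_const]
      apply intervalIntegral.integral_congr
      intro s hs
      rw [uIcc_of_le ht.2] at hs
      simp only
      rw [h0 (t - s) (by linarith [hs.1])]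
    rw [intervalIntegral.integral_interval_sub_left hk h1, ← e3, e1, ← e2]
    simp
  refine ContinuousOn.congr ?_ key
  apply ContinuousOn.sub
  · apply Continuous.continuousOn
    apply intervalIntegral.continuous_of_dominated_interval (bound := fun s => ‖k s‖ * B)
    · intro t
      have hc : Continuous (fun s => h (t - s)) := by fun_prop
      rw [uIoc_of_le hr.le]
      exact (hk.smul_continuousOn hc.continuousOn).1.aestronglyMeasurable
    · intro t
      filter_upwards with s _
      rw [norm_smul]
      exact mul_le_mul_of_nonneg_left (hB _) (norm_nonneg _)
    · exact hk.norm.mul_const B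
    · filter_upwards with s _
      fun_prop
  · have h2 := intervalIntegral.continuousOn_primitive_interval' hk left_mem_uIcc
    rw [uIcc_of_le hr.le] at h2
    have h3 : ContinuousOn (fun t => (∫ s in (0:ℝ)..r, k s) - ∫ s in (0:ℝ)..t, k s) (Icc 0 r) :=
      continuousOn_const.sub h2
    exact h3.smul (continuousOn_const (c := h 0))

lemma conv_fubini [CompleteSpace X] {k K : ℝ → ℝ} {r t : ℝ} (hk : IntervalIntegrable k volume 0 r)
    (ht : t ∈ Icc 0 r) (hK : ∀ s ∈ Icc 0 r, (∫ v in (0:ℝ)..s, k v) = K s)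
    {h : ℝ → X} (hh : Continuous h) :
    (∫ s in (0:ℝ)..t, ∫ v in (0:ℝ)..s, k (s - v) • h v)
      = ∫ v in (0:ℝ)..t, K (t - v) • h v := by
  have hkt : IntervalIntegrable k volume 0 t := by
    apply hk.mono_set
    rw [uIcc_of_le ht.1, uIcc_of_le (ht.1.trans ht.2)]
    exact Icc_subset_Icc le_rfl ht.2
  have hI1 : Integrable ((Ioc 0 t).indicator k) :=
    (integrable_indicator_iff measurableSet_Ioc).2
      ((intervalIntegrable_iff_integrableOn_Ioc_of_le ht.1).1 hkt)
  have hI2 : Integrable ((Ioc 0 t).indicator h) :=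
    (integrable_indicator_iff measurableSet_Ioc).2
      ((intervalIntegrable_iff_integrableOn_Ioc_of_le ht.1).1 (hh.intervalIntegrable _ _))
  have hI := Integrable.convolution_integrand
    (ContinuousLinearMap.lsmul ℝ ℝ : ℝ →L[ℝ] X →L[ℝ] X).flip hI2 hI1
  have sw := intervalIntegral_intervalIntegral_swap (a := 0) (b := t) (c := 0) (d := t)
    (F := fun s v => (Ioc 0 t).indicator k (s - v) • (Ioc 0 t).indicator h v)
    (by
      have := hI.integrableOn (s := uIoc 0 t ×ˢ uIoc 0 t)
      exact this)
  calc _ = ∫ s in (0:ℝ)..t, ∫ v in (0:ℝ)..t,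
        (Ioc 0 t).indicator k (s - v) • (Ioc 0 t).indicator h v := by
        apply intervalIntegral.integral_congr
        intro s hs
        rw [uIcc_of_le ht.1] at hs
        simp only
        rw [intervalIntegral.integral_of_le hs.1, intervalIntegral.integral_of_le ht.1,
          integral_Ioc_eq_integral_Ioo, integral_Ioc_eq_integral_Ioo (y := t),
          ← integral_indicator measurableSet_Ioo, ← integral_indicator measurableSet_Ioo]
        congr 1
        ext v
        by_cases hv : v ∈ Ioo 0 s
        · have hv2 : v ∈ Ioo 0 t := ⟨hv.1, hv.2.trans_le hs.2⟩
          have hv3 : v ∈ Ioc 0 t := ⟨hv2.1, hv2.2.le⟩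
          have hv4 : s - v ∈ Ioc 0 t := ⟨by linarith [hv.2], by linarith [hv.1, hs.2]⟩
          simp only [indicator_of_mem hv, indicator_of_mem hv2, indicator_of_mem hv3,
            indicator_of_mem hv4]
        · rw [indicator_of_notMem hv]
          by_cases hv2 : v ∈ Ioo 0 t
          · have hv4 : s - v ∉ Ioc 0 t := fun h' => hv ⟨hv2.1, by linarith [h'.1]⟩
            simp only [indicator_of_mem hv2, indicator_of_notMem hv4, zero_smul]
          · rw [indicator_of_notMem hv2]
    _ = _ := sw
    _ = _ := by
        rw [intervalIntegral.integral_of_le ht.1, intervalIntegral.integral_of_le ht.1]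
        apply setIntegral_congr_fun measurableSet_Ioc
        intro v hv
        simp only
        rw [intervalIntegral.integral_smul_const, indicator_of_mem hv]
        congr 1
        rw [intervalIntegral.integral_comp_sub_right (fun s => (Ioc 0 t).indicator k s) v,
          ← hK (t - v) ⟨by linarith [hv.2], by linarith [hv.1, ht.2]⟩]
        rw [← intervalIntegral.integral_add_adjacent_intervals (b := 0)
          (hI1.intervalIntegrable) (hI1.intervalIntegrable)]
        have z1 : (∫ s in (0 - v)..0, (Ioc 0 t).indicator k s) = 0 := by
          apply intervalIntegral.integral_zero_ae
          filter_upwards with s hs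
          rw [uIoc_of_le (by linarith [hv.1])] at hs
          apply indicator_of_notMem
          intro h'
          linarith [h'.1, hs.2]
        rw [z1, zero_add, intervalIntegral.integral_of_le (by linarith [hv.2]),
          intervalIntegral.integral_of_le (by linarith [hv.2])]
        apply setIntegral_congr_fun measurableSet_Ioc
        intro s hs
        apply indicator_of_mem
        exact ⟨hs.1, by linarith [hs.2, hv.1]⟩

lemma conv_op {k : ℝ → ℝ} {r t : ℝ} (hk : IntervalIntegrable k volume 0 r)
    (ht : t ∈ Icc 0 r) {V : ℝ → X →L[ℂ] X} (hV : ∀ x, Continuous (fun s => V s x))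
    {M : ℝ} (hM : ∀ s, ‖V s‖ ≤ M) :
    ∃ T : X →L[ℂ] X, (∀ x, T x = ∫ s in (0:ℝ)..t, k (t - s) • V s x) ∧
      ‖T‖ ≤ (∫ s in (0:ℝ)..r, ‖k s‖) * M := by
  have hM0 : 0 ≤ M := (norm_nonneg _).trans (hM 0)
  have hkk : 0 ≤ ∫ s in (0:ℝ)..r, ‖k s‖ :=
    intervalIntegral.integral_nonneg (ht.1.trans ht.2) (fun _ _ => norm_nonneg _)
  have hb : ∀ x, ‖∫ s in (0:ℝ)..t, k (t - s) • V s x‖ ≤ ((∫ s in (0:ℝ)..r, ‖k s‖) * M) * ‖x‖ := by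
    intro x
    rw [mul_assoc]
    exact conv_bound hk ht (h := fun s => V s x) fun s => (V s).le_of_opNorm_le (hM s) x
  let L : X →ₗ[ℂ] X :=
    { toFun := fun x => ∫ s in (0:ℝ)..t, k (t - s) • V s x
      map_add' := fun x y => by
        rw [← intervalIntegral.integral_add (conv_int hk ht (hV x)) (conv_int hk ht (hV y))]
        simp [smul_add]
      map_smul' := fun c x => by
        rw [RingHom.id_apply, ← intervalIntegral.integral_smul]
        congr 1
        ext s
        rw [map_smul, smul_comm] }
  exact ⟨L.mkContinuous _ hb, fun x => rfl, L.mkContinuous_norm_le (mul_nonneg hkk hM0) hb⟩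

lemma strong_comp_cont {P : ℝ → X →L[ℂ] X} {s : Set ℝ} {C : ℝ} (hC : ∀ t ∈ s, ‖P t‖ ≤ C)
    (hP : ∀ x, ContinuousOn (fun t => P t x) s) {f : ℝ → X} (hf : ContinuousOn f s) :
    ContinuousOn (fun t => P t (f t)) s := by
  intro t ht
  have h1 : Filter.Tendsto (fun v => P v (f t)) (nhdsWithin t s) (nhds (P t (f t))) := hP (f t) t ht
  have h2 : Filter.Tendsto (fun v => P v (f v - f t)) (nhdsWithin t s) (nhds 0) := by
    apply squeeze_zero_norm' (a := fun v => C * ‖f v - f t‖)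
    · filter_upwards [self_mem_nhdsWithin] with v hv
      exact (P v).le_of_opNorm_le (hC v hv) _
    · have h3 : Filter.Tendsto (fun v => f v - f t) (nhdsWithin t s) (nhds (f t - f t)) :=
        Filter.Tendsto.sub (hf t ht) tendsto_const_nhds
      simpa using (h3.norm).const_mul C
  have h4 := h2.add h1
  rw [zero_add] at h4
  refine Filter.Tendsto.congr ?_ h4
  intro v
  rw [← map_add, sub_add_cancel]

end Conv

section Core
variable {X : Type*} [NormedAddCommGroup X] [NormedSpace ℂ X] [CompleteSpace X]

lemma graph_integral {A : X →ₗ.[ℂ] X} (hA : IsClosed (A.graph : Set (X × X))) {a b : ℝ}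
    (hab : a ≤ b) {u v : ℝ → X} (hu : IntervalIntegrable u volume a b)
    (hv : IntervalIntegrable v volume a b)
    (h : ∀ s ∈ Icc a b, (u s, v s) ∈ A.graph) :
    (∫ s in a..b, u s, ∫ s in a..b, v s) ∈ A.graph := by
  have : IsClosed (A.graph : Set (X × X)) := hA
  have hp : IntervalIntegrable (fun s => (u s, v s)) volume a b :=
    ⟨hu.1.prodMk hv.1, hu.2.prodMk hv.2⟩
  have e1 : (∫ s in a..b, u s, ∫ s in a..b, v s) = ∫ s in a..b, (u s, v s) := by
    ext
    · exact (ContinuousLinearMap.intervalIntegral_comp_comm (ContinuousLinearMap.fst ℂ X X) hp)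
    · exact (ContinuousLinearMap.intervalIntegral_comp_comm (ContinuousLinearMap.snd ℂ X X) hp)
  rw [e1, ← Submodule.Quotient.mk_eq_zero]
  have e2 := ContinuousLinearMap.intervalIntegral_comp_comm (A.graph.mkQL) hp
  change A.graph.mkQL _ = 0
  rw [← e2]
  apply intervalIntegral.integral_zero_ae
  filter_upwards with s hs
  rw [uIoc_of_le hab] at hs
  exact (Submodule.Quotient.mk_eq_zero _).2 (h s ⟨hs.1.le, hs.2⟩)

lemma closed_bound {A : X →ₗ.[ℂ] X} (hA : IsClosed (A.graph : Set (X × X))) {r : ℝ} (hr : 0 < r)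
    {P : ℝ → X →L[ℂ] X} (hP : ∀ x, Continuous (fun t => P t x)) {C : ℝ} (hC : ∀ t, ‖P t‖ ≤ C)
    (hdom : ∀ f : ℝ → X, Continuous f → (∫ s in (0:ℝ)..r, P s (f s)) ∈ A.domain) :
    ∃ C0 : ℝ, 0 ≤ C0 ∧ ∀ f : ℝ → X, Continuous f → (∀ s, ‖f s‖ ≤ 1) → ∀ z,
      (∫ s in (0:ℝ)..r, P s (f s), z) ∈ A.graph → ‖z‖ ≤ C0 := by
  have hPf : ∀ f : ℝ → X, Continuous f → Continuous (fun t => P t (f t)) := by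
    intro f hf
    rw [← continuousOn_univ]
    exact strong_comp_cont (fun t _ => hC t) (fun x => (hP x).continuousOn) hf.continuousOn
  have hPi : ∀ f : ℝ → X, Continuous f → IntervalIntegrable (fun t => P t (f t)) volume 0 r :=
    fun f hf => (hPf f hf).intervalIntegrable _ _
  let K0 : BoundedContinuousFunction ℝ X →ₗ[ℂ] X :=
    { toFun := fun f => ∫ s in (0:ℝ)..r, P s (f s)
      map_add' := fun f f' => by
        rw [← intervalIntegral.integral_add (hPi f f.continuous) (hPi f' f'.continuous)]
        simp
      map_smul' := fun c f => by
        rw [RingHom.id_apply, ← intervalIntegral.integral_smul]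
        simp }
  have hK0 : ∀ f, ‖K0 f‖ ≤ (C * r) * ‖f‖ := by
    intro f
    have := intervalIntegral.norm_integral_le_of_norm_le_const (a := 0) (b := r)
      (f := fun s => P s (f s)) (C := C * ‖f‖) (fun s _ =>
        ((P s).le_of_opNorm_le (hC s) _).trans
          (mul_le_mul_of_nonneg_left (f.norm_coe_le_norm s) ((norm_nonneg _).trans (hC 0))))
    rw [sub_zero, abs_of_pos hr] at this
    calc _ ≤ _ := this
      _ = _ := by ring
  let K : BoundedContinuousFunction ℝ X →L[ℂ] X := K0.mkContinuous _ hK0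
  let T : BoundedContinuousFunction ℝ X →ₗ[ℂ] X :=
    A.toFun ∘ₗ (K0.codRestrict A.domain (fun f => hdom f f.continuous))
  have hT : ∀ f, (K f, T f) ∈ A.graph := fun f =>
    A.mem_graph ⟨K0 f, hdom f f.continuous⟩
  have hTc : Continuous T := by
    apply LinearMap.continuous_of_isClosed_graph
    have : (T.graph : Set (BoundedContinuousFunction ℝ X × X)) =
        (fun p : BoundedContinuousFunction ℝ X × X => (K p.1, p.2)) ⁻¹' (A.graph : Set (X × X)) := by
      ext ⟨f, z⟩
      simp only [SetLike.mem_coe, LinearMap.mem_graph_iff, mem_preimage]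
      constructor
      · rintro rfl
        exact hT f
      · intro h
        exact A.mem_graph_snd_inj h (hT f) rfl
    rw [this]
    exact hA.preimage (by fun_prop)
  let T' : BoundedContinuousFunction ℝ X →L[ℂ] X := ⟨T, hTc⟩
  refine ⟨‖T'‖, norm_nonneg _, fun f hf hf1 z hz => ?_⟩
  let F : BoundedContinuousFunction ℝ X := BoundedContinuousFunction.ofNormedAddCommGroup f hf 1 hf1
  have hF : ‖F‖ ≤ 1 := BoundedContinuousFunction.norm_ofNormedAddCommGroup_le _ zero_le_one hf1
  have hz' : z = T' F := A.mem_graph_snd_inj hz (hT F) rfl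
  rw [hz']
  exact (T'.le_opNorm F).trans (mul_le_of_le_one_right (norm_nonneg _) hF)

noncomputable def ramp (ε d s : ℝ) : ℝ := max 0 (min 1 ((s - d) / ε))

lemma ramp_cont (ε d : ℝ) : Continuous (ramp ε d) := by
  unfold ramp; fun_prop

lemma ramp_anti {ε : ℝ} (hε : 0 < ε) {d d' : ℝ} (h : d ≤ d') (s : ℝ) :
    ramp ε d' s ≤ ramp ε d s := by
  unfold ramp
  gcongr

lemma ramp_limit {A : X →ₗ.[ℂ] X} (hA : IsClosed (A.graph : Set (X × X))) {r : ℝ}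
    {P : ℝ → X →L[ℂ] X} (hP : ∀ x, Continuous (fun t => P t x))
    {S : ℝ → X →L[ℂ] X} (hS : ∀ x : X, ContinuousOn (fun t => S t x) (Ici (0:ℝ)))
    (hgr : ∀ x, ∀ t ∈ Icc 0 r, (∫ s in (0:ℝ)..t, P s x, S t x - x) ∈ A.graph)
    {d : ℝ} (hd : d ∈ Icc 0 r) (x : X) :
    ∃ L : ℝ → X, Filter.Tendsto L (nhdsWithin 0 (Ioi 0)) (nhds (S r x - S d x)) ∧
      ∀ᶠ ε in nhdsWithin (0:ℝ) (Ioi 0),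
        (∫ s in (0:ℝ)..r, ramp ε d s • P s x, L ε) ∈ A.graph := by
  have hrI : r ∈ Icc 0 r := ⟨hd.1.trans hd.2, le_rfl⟩
  rcases hd.2.eq_or_lt with hdr | hdr
  · refine ⟨fun _ => 0, by rw [hdr, sub_self]; exact tendsto_const_nhds, ?_⟩
    filter_upwards [self_mem_nhdsWithin] with ε hε
    have : (∫ s in (0:ℝ)..r, ramp ε d s • P s x) = 0 := by
      apply intervalIntegral.integral_zero_ae
      filter_upwards with s hs
      rw [uIoc_of_le hrI.1] at hs
      have h1 : (s - d) / ε ≤ 0 := div_nonpos_of_nonpos_of_nonneg (by linarith [hs.2]) (le_of_lt hε)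
      have : ramp ε d s = 0 := by
        unfold ramp
        rw [max_eq_left]
        exact (min_le_right _ _).trans h1
      rw [this, zero_smul]
    rw [this]
    exact A.graph.zero_mem
  · let Q : ℝ → X := fun t => ∫ s in (0:ℝ)..t, P s x
    have hQd : ∀ t, HasDerivAt Q (P t x) t := fun t =>
      intervalIntegral.integral_hasDerivAt_right ((hP x).intervalIntegrable _ _)
        (hP x).stronglyMeasurable.stronglyMeasurableAtFilter (hP x).continuousAt
    have hQc : Continuous Q := continuous_iff_continuousAt.2 fun t => (hQd t).continuousAt
    have hSd : ContinuousOn (fun t => S t x) (Icc d r) :=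
      (hS x).mono fun s hs => hd.1.trans hs.1
    refine ⟨fun ε => S r x - ε⁻¹ • ∫ s in d..(d + ε), S s x, ?_, ?_⟩
    · apply tendsto_const_nhds.sub
      have hder : HasDerivWithinAt (fun t => ∫ s in d..t, S s x) (S d x) (Ioi d) d := by
        have : HasDerivWithinAt (fun t => ∫ s in d..t, S s x) (S d x) (Ici d) d := by
          apply intervalIntegral.integral_hasDerivWithinAt_right (t := Ioi d)
          · simp
          · refine ⟨Icc d r, ?_, ?_⟩
            · exact Filter.mem_of_superset (Ioc_mem_nhdsGT hdr) Ioc_subset_Icc_self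
            · exact hSd.aestronglyMeasurable measurableSet_Icc
          · exact ((hS x) d hd.1).mono fun s hs => hd.1.trans (le_of_lt hs)
        exact this.mono Ioi_subset_Ici_self
      rw [hasDerivWithinAt_iff_tendsto_slope' (by simp)] at hder
      have hsh : Filter.Tendsto (fun ε : ℝ => d + ε) (nhdsWithin 0 (Ioi 0))
          (nhdsWithin d (Ioi d)) := by
        apply tendsto_nhdsWithin_of_tendsto_nhds_of_eventually_within
        · have : Filter.Tendsto (fun ε : ℝ => d + ε) (nhds 0) (nhds (d + 0)) :=
            Continuous.tendsto (by fun_prop) 0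
          rw [add_zero] at this
          exact this.mono_left nhdsWithin_le_nhds
        · filter_upwards [self_mem_nhdsWithin] with ε hε
          simpa using hε
      refine (hder.comp hsh).congr fun ε => ?_
      simp [slope_def_module]
    · have hmem : Ioo (0:ℝ) (r - d) ∈ nhdsWithin (0:ℝ) (Ioi 0) := Ioo_mem_nhdsGT (by linarith)
      filter_upwards [hmem] with ε hε
      have hε0 := hε.1
      have hdε : d + ε ≤ r := by linarith [hε.2]
      have hc : Continuous (fun s => ramp ε d s • P s x) := (ramp_cont ε d).smul (hP x)
      have hi : ∀ a b, IntervalIntegrable (fun s => ramp ε d s • P s x) volume a b :=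
        fun a b => hc.intervalIntegrable a b
      have s1 : (∫ s in (0:ℝ)..d, ramp ε d s • P s x) = 0 := by
        apply intervalIntegral.integral_zero_ae
        filter_upwards with s hs
        rw [uIoc_of_le hd.1] at hs
        have h1 : (s - d) / ε ≤ 0 :=
          div_nonpos_of_nonpos_of_nonneg (by linarith [hs.2]) hε0.le
        have : ramp ε d s = 0 := by
          unfold ramp
          rw [max_eq_left]
          exact (min_le_right _ _).trans h1
        rw [this, zero_smul]
      have s3 : (∫ s in (d + ε)..r, ramp ε d s • P s x) = Q r - Q (d + ε) := by
        rw [intervalIntegral.integral_interval_sub_left ((hP x).intervalIntegrable _ _)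
          ((hP x).intervalIntegrable _ _)]
        apply intervalIntegral.integral_congr
        intro s hs
        rw [uIcc_of_le hdε] at hs
        have h1 : 1 ≤ (s - d) / ε := by rw [le_div_iff₀ hε0]; linarith [hs.1]
        have : ramp ε d s = 1 := by
          unfold ramp
          rw [min_eq_left h1]
          simp
        simp only [this, one_smul]
      have s2 : (∫ s in d..(d + ε), ramp ε d s • P s x)
          = Q (d + ε) - ε⁻¹ • ∫ s in d..(d + ε), Q s := by
        have e1 : (∫ s in d..(d + ε), ramp ε d s • P s x)
            = ∫ s in d..(d + ε), ((s - d) / ε) • P s x := by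
          apply intervalIntegral.integral_congr
          intro s hs
          rw [uIcc_of_le (by linarith)] at hs
          have h1 : (s - d) / ε ≤ 1 := by rw [div_le_iff₀ hε0]; linarith [hs.2]
          have h2 : 0 ≤ (s - d) / ε := div_nonneg (by linarith [hs.1]) hε0.le
          have : ramp ε d s = (s - d) / ε := by
            unfold ramp
            rw [min_eq_right h1, max_eq_right h2]
          simp only [this]
        have ibp := intervalIntegral.integral_smul_deriv_eq_deriv_smul_of_hasDerivAt
          (a := d) (b := d + ε) (u := fun s => (s - d) / ε) (u' := fun _ => ε⁻¹)
          (v := Q) (v' := fun s => P s x)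
          (by fun_prop) hQc.continuousOn
          (fun s _ => by simpa using ((hasDerivAt_id s).sub_const d).div_const ε)
          (fun s _ => hQd s) (by simp) ((hP x).intervalIntegrable _ _)
        rw [e1, ibp, intervalIntegral.integral_smul]
        simp [hε0.ne']
      have tot : (∫ s in (0:ℝ)..r, ramp ε d s • P s x)
          = Q r - ε⁻¹ • ∫ s in d..(d + ε), Q s := by
        rw [← intervalIntegral.integral_add_adjacent_intervals (hi 0 d) (hi d r),
          ← intervalIntegral.integral_add_adjacent_intervals (hi d (d + ε)) (hi (d + ε) r),
          s1, s2, s3]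
        abel
      have hSi : IntervalIntegrable (fun s => S s x) volume d (d + ε) := by
        apply ContinuousOn.intervalIntegrable
        rw [uIcc_of_le (by linarith)]
        exact hSd.mono (Icc_subset_Icc le_rfl hdε)
      have hg := graph_integral hA (a := d) (b := d + ε) (by linarith)
        (u := Q) (v := fun s => S s x - x) (hQc.intervalIntegrable _ _)
        (hSi.sub (by simp))
        (fun s hs => hgr x s ⟨hd.1.trans hs.1, hs.2.trans hdε⟩)
      have hg2 := A.graph.sub_mem (hgr x r hrI) (A.graph.smul_mem ((ε⁻¹ : ℝ) : ℂ) hg)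
      have e : (∫ s in (0:ℝ)..r, ramp ε d s • P s x, S r x - ε⁻¹ • ∫ s in d..(d + ε), S s x)
          = (∫ s in (0:ℝ)..r, P s x, S r x - x) - ((ε⁻¹ : ℝ) : ℂ) •
            (∫ s in d..(d + ε), Q s, ∫ s in d..(d + ε), (S s x - x)) := by
        rw [Complex.coe_smul]
        ext
        · simp only [Prod.fst_sub, Prod.smul_fst, tot, Q]
        · simp only [Prod.snd_sub, Prod.smul_snd]
          rw [intervalIntegral.integral_sub hSi (by simp), smul_sub]
          simp [smul_smul, hε0.ne']
      rw [e]
      exact hg2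

lemma core {A : X →ₗ.[ℂ] X} (hA : IsClosed (A.graph : Set (X × X))) {r : ℝ} (hr : 0 < r)
    {P : ℝ → X →L[ℂ] X} (hP : ∀ x, Continuous (fun t => P t x)) {C : ℝ} (hC : ∀ t, ‖P t‖ ≤ C)
    (hdom : ∀ f : ℝ → X, Continuous f → (∫ s in (0:ℝ)..r, P s (f s)) ∈ A.domain)
    {S : ℝ → X →L[ℂ] X} (hS : ∀ x : X, ContinuousOn (fun t => S t x) (Ici (0:ℝ)))
    (hgr : ∀ x, ∀ t ∈ Icc 0 r, (∫ s in (0:ℝ)..t, P s x, S t x - x) ∈ A.graph) :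
    BoundedSemivariation S r := by
  obtain ⟨C0, hC0, hb⟩ := closed_bound hA hr hP hC hdom
  refine ⟨C0, fun n d x hd0 hdn hmono hx => ?_⟩
  have hmono' : ∀ i j, i ≤ j → j ≤ n → d i ≤ d j := by
    intro i j hij
    induction j, hij using Nat.le_induction with
    | base => exact fun _ => le_rfl
    | succ m hm ih => exact fun h => (ih (by omega)).trans (hmono m (by omega)).le
  have hd : ∀ i ≤ n, d i ∈ Icc 0 r := fun i hi =>
    ⟨hd0 ▸ hmono' 0 i (Nat.zero_le _) hi, hdn ▸ hmono' i n hi le_rfl⟩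
  have hL : ∀ i x, ∃ L : ℝ → X, i ≤ n →
      (Filter.Tendsto L (nhdsWithin 0 (Ioi 0)) (nhds (S r x - S (d i) x)) ∧
      ∀ᶠ ε in nhdsWithin (0:ℝ) (Ioi 0),
        (∫ s in (0:ℝ)..r, ramp ε (d i) s • P s x, L ε) ∈ A.graph) := by
    intro i x
    by_cases hi : i ≤ n
    · obtain ⟨L, hL⟩ := ramp_limit hA hP hS hgr (hd i hi) x
      exact ⟨L, fun _ => hL⟩
    · exact ⟨fun _ => 0, fun h => absurd h hi⟩
  choose L hL using hL
  have hlim : Filter.Tendsto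
      (fun ε => ∑ i ∈ Finset.range n, (L i (x i) ε - L (i + 1) (x i) ε)) (nhdsWithin 0 (Ioi 0))
      (nhds (∑ i ∈ Finset.range n, (S (d (i + 1)) - S (d i)) (x i))) := by
    apply tendsto_finsetSum
    intro i hi
    rw [Finset.mem_range] at hi
    have := (hL i (x i) hi.le).1.sub (hL (i + 1) (x i) hi).1
    convert this using 2
    simp
  refine le_of_tendsto hlim.norm ?_
  have hev : ∀ᶠ ε in nhdsWithin (0:ℝ) (Ioi 0), ∀ i ∈ Finset.range n,
      (∫ s in (0:ℝ)..r, ramp ε (d i) s • P s (x i), L i (x i) ε) ∈ A.graph ∧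
      (∫ s in (0:ℝ)..r, ramp ε (d (i+1)) s • P s (x i), L (i+1) (x i) ε) ∈ A.graph := by
    rw [Filter.eventually_all_finset]
    intro i hi
    rw [Finset.mem_range] at hi
    exact (hL i (x i) hi.le).2.and (hL (i + 1) (x i) hi).2
  filter_upwards [hev, self_mem_nhdsWithin] with ε hε hε0
  have hε0 : 0 < ε := hε0
  have hi : ∀ d x, IntervalIntegrable (fun s => ramp ε d s • P s x) volume 0 r := fun d x =>
    ((ramp_cont ε d).smul (hP x)).intervalIntegrable _ _
  apply hb (fun s => ∑ i ∈ Finset.range n, (ramp ε (d i) s - ramp ε (d (i + 1)) s) • x i)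
  · apply continuous_finsetSum
    intro i _
    exact ((ramp_cont ε _).sub (ramp_cont ε _)).smul continuous_const
  · intro s
    calc _ ≤ ∑ i ∈ Finset.range n, (ramp ε (d i) s - ramp ε (d (i + 1)) s) := by
          apply norm_sum_le_of_le
          intro i hi
          rw [Finset.mem_range] at hi
          have := ramp_anti hε0 (hmono i hi).le s
          rw [norm_smul, Real.norm_of_nonneg (by linarith)]
          exact mul_le_of_le_one_right (by linarith) (hx i)
      _ = ramp ε (d 0) s - ramp ε (d n) s := Finset.sum_range_sub' (fun i => ramp ε (d i) s) n
      _ ≤ 1 := by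
          have h1 : ramp ε (d 0) s ≤ 1 := max_le zero_le_one (min_le_left _ _)
          have h2 : 0 ≤ ramp ε (d n) s := le_max_left _ _
          linarith
  · have e : (∫ s in (0:ℝ)..r, P s (∑ i ∈ Finset.range n,
        (ramp ε (d i) s - ramp ε (d (i + 1)) s) • x i),
        ∑ i ∈ Finset.range n, (L i (x i) ε - L (i + 1) (x i) ε)) =
        ∑ i ∈ Finset.range n,
          ((∫ s in (0:ℝ)..r, ramp ε (d i) s • P s (x i), L i (x i) ε) -
          (∫ s in (0:ℝ)..r, ramp ε (d (i+1)) s • P s (x i), L (i+1) (x i) ε)) := by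
      ext
      · simp only [Prod.fst_sum, Prod.fst_sub]
        have : ∀ s, P s (∑ i ∈ Finset.range n, (ramp ε (d i) s - ramp ε (d (i + 1)) s) • x i)
            = ∑ i ∈ Finset.range n, (ramp ε (d i) s • P s (x i) - ramp ε (d (i+1)) s • P s (x i)) := by
          intro s
          rw [map_sum]
          apply Finset.sum_congr rfl
          intro i _
          rw [← sub_smul, ← Complex.coe_smul, map_smul, Complex.coe_smul]
        simp_rw [this]
        rw [intervalIntegral.integral_finsetSum (fun i _ => (hi _ _).sub (hi _ _))]
        apply Finset.sum_congr rfl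
        intro i _
        exact intervalIntegral.integral_sub (hi _ _) (hi _ _)
      · simp only [Prod.snd_sum, Prod.snd_sub]
    rw [e]
    exact A.graph.sum_mem fun i hi => A.graph.sub_mem (hε i hi).1 (hε i hi).2

end Core

lemma g_int {β : ℝ} (hβ : 0 < β) (r : ℝ) : IntervalIntegrable (g β) volume 0 r := by
  unfold g
  exact (intervalIntegral.intervalIntegrable_rpow' (by linarith)).div_const _

lemma g_prim {α : ℝ} (hα : 1 < α) (s : ℝ) : (∫ v in (0:ℝ)..s, g (α - 1) v) = g α s := by
  unfold g
  have h0 : α - 1 ≠ 0 := by linarith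
  have hG : Real.Gamma α = (α - 1) * Real.Gamma (α - 1) := by
    have := Real.Gamma_add_one h0
    rwa [sub_add_cancel] at this
  rw [intervalIntegral.integral_div, integral_rpow (Or.inl (by linarith)), sub_add_cancel,
    Real.zero_rpow h0, hG, sub_zero, div_div]

lemma full_graph {X : Type*} [NormedAddCommGroup X] [NormedSpace ℂ X] [CompleteSpace X]
    {α : ℝ} (hα1 : 1 < α)
    {A : X →ₗ.[ℂ] X} (hA_closed : IsClosed (A.graph : Set (X × X)))
    (hA_dense : Dense (A.domain : Set X))
    {S V : ℝ → X →L[ℂ] X} {r M : ℝ}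
    (hVc : ∀ x, Continuous fun t => V t x) (hVM : ∀ t, ‖V t‖ ≤ M)
    (hVS : ∀ t ∈ Icc 0 r, V t = S t)
    (hS_comm : ∀ t : ℝ, 0 ≤ t → ∀ x y : X, (x, y) ∈ A.graph → (S t x, S t y) ∈ A.graph)
    (hS_eq : ∀ t : ℝ, 0 ≤ t → ∀ x y : X, (x, y) ∈ A.graph →
      S t x = x + ∫ s in (0:ℝ)..t, g α (t - s) • S s y) (x : X) (t : ℝ) (ht : t ∈ Icc 0 r) :
    (∫ s in (0:ℝ)..t, g α (t - s) • V s x, S t x - x) ∈ A.graph := by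
  have hk := g_int (show 0 < α by linarith) r
  obtain ⟨T, hT, -⟩ := conv_op hk ht hVc hVM
  have hcl : IsClosed {x : X | (T x, S t x - x) ∈ A.graph} :=
    hA_closed.preimage (f := fun x => (T x, S t x - x)) (by fun_prop)
  have hsub : (A.domain : Set X) ⊆ {x : X | (T x, S t x - x) ∈ A.graph} := by
    intro x hx
    obtain ⟨y, hy⟩ := LinearPMap.mem_domain_iff.1 hx
    have e : S t x - x = ∫ s in (0:ℝ)..t, g α (t - s) • V s y := by
      rw [hS_eq t ht.1 x y hy, add_sub_cancel_left]
      apply intervalIntegral.integral_congr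
      intro s hs
      rw [uIcc_of_le ht.1] at hs
      simp only
      rw [hVS s ⟨hs.1, hs.2.trans ht.2⟩]
    rw [mem_setOf_eq, hT, e]
    apply graph_integral hA_closed ht.1 (conv_int hk ht (hVc x)) (conv_int hk ht (hVc y))
    intro s hs
    rw [hVS s ⟨hs.1, hs.2.trans ht.2⟩]
    have := A.graph.smul_mem ((g α (t - s) : ℝ) : ℂ) (hS_comm s hs.1 x y hy)
    rw [Complex.coe_smul] at this
    exact this
  have := (hcl.closure_subset_iff.2 hsub) (hA_dense x)
  rw [mem_setOf_eq, hT] at this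
  exact this

theorem stmt_15
    {X : Type*} [NormedAddCommGroup X] [NormedSpace ℂ X] [CompleteSpace X]
    (α : ℝ) (hα1 : 1 < α) (hα2 : α < 2)
    (A : X →ₗ.[ℂ] X) (hA_closed : IsClosed (A.graph : Set (X × X)))
    (hA_dense : Dense (A.domain : Set X))
    (S : ℝ → X →L[ℂ] X)
    (hS_cont : ∀ x : X, ContinuousOn (fun t => S t x) (Ici (0:ℝ)))
    (hS_zero : S 0 = 1)
    (hS_dom : ∀ t : ℝ, 0 ≤ t → ∀ x ∈ A.domain, S t x ∈ A.domain)
    (hS_comm : ∀ t : ℝ, 0 ≤ t → ∀ x y : X, (x, y) ∈ A.graph → (S t x, S t y) ∈ A.graph)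
    (hS_eq : ∀ t : ℝ, 0 ≤ t → ∀ x y : X, (x, y) ∈ A.graph →
      S t x = x + ∫ s in (0:ℝ)..t, g α (t - s) • S s y)
    (r : ℝ) (hr : 0 < r)
    (hstrong : ∀ x ∈ A.domain, ∀ y ∈ A.domain, ∀ f : ℝ → X, ContinuousOn f (Icc 0 r) →
      IsStrongSolution α A r f x y
        (fun t => S t x + (∫ s in (0:ℝ)..t, S s y) +
          ∫ s in (0:ℝ)..t, Pa α S (t - s) (f s))) :
    BoundedSemivariation S r := by
  have hbs : ∃ M, ∀ i : Icc (0:ℝ) r, ‖S i‖ ≤ M := by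
    apply banach_steinhaus
    intro x
    obtain ⟨C, hC⟩ := isCompact_Icc.exists_bound_of_continuousOn
      ((hS_cont x).mono (Icc_subset_Ici_self : Icc 0 r ⊆ Ici 0))
    exact ⟨C, fun i => hC i i.2⟩
  obtain ⟨M, hM⟩ := hbs
  let c : ℝ → ℝ := fun τ => max 0 (min r τ)
  have hc : Continuous c := by fun_prop
  have hcI : ∀ τ, c τ ∈ Icc 0 r := fun τ => ⟨le_max_left _ _, max_le hr.le (min_le_left _ _)⟩
  have hcid : ∀ τ ∈ Icc 0 r, c τ = τ := fun τ hτ => by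
    simp only [c]
    rw [min_eq_right hτ.2, max_eq_right hτ.1]
  have hc0 : ∀ τ ≤ 0, c τ = c 0 := fun τ hτ => by
    simp only [c]
    rw [min_eq_right (hτ.trans hr.le), max_eq_left hτ, min_eq_right hr.le, max_self]
  let V : ℝ → X →L[ℂ] X := fun τ => S (c τ)
  have hVc : ∀ x, Continuous fun t => V t x := fun x =>
    (hS_cont x).comp_continuous hc fun t => (hcI t).1
  have hVM : ∀ t, ‖V t‖ ≤ M := fun t => hM ⟨c t, hcI t⟩
  have hVS : ∀ t ∈ Icc 0 r, V t = S t := fun t ht => by simp only [V, hcid t ht]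
  have hk := g_int (show 0 < α - 1 by linarith) r
  choose T hT hTn using fun t => conv_op hk (hcI t) hVc hVM
  have hTPa : ∀ t ∈ Icc 0 r, ∀ x, T t x = Pa α S t x := by
    intro t ht x
    rw [hT, hcid t ht]
    unfold Pa
    apply intervalIntegral.integral_congr
    intro s hs
    rw [uIcc_of_le ht.1] at hs
    simp only
    rw [hVS s ⟨hs.1, hs.2.trans ht.2⟩]
  have hTc : ∀ x, Continuous fun t => T t x := by
    intro x
    have h1 := conv_cont hr hk (hVc x) (B := M * ‖x‖) (fun s => (V s).le_of_opNorm_le (hVM s) x)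
      (fun s hs => by simp only [V, hc0 s hs])
    have h2 := h1.comp_continuous hc hcI
    convert h2 using 1
    ext t
    exact hT t x
  refine core hA_closed hr hTc hTn ?_ hS_cont ?_
  · intro f hf
    obtain ⟨Au, u', w', w'', -, hgr, -⟩ := hstrong 0 A.domain.zero_mem 0 A.domain.zero_mem
      (fun s => f (r - s)) (by fun_prop)
    have h1 := LinearPMap.mem_domain_of_mem_graph (hgr r ⟨hr.le, le_rfl⟩)
    have e : (∫ s in (0:ℝ)..r, Pa α S (r - s) (f (r - s))) = ∫ s in (0:ℝ)..r, T s (f s) := by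
      rw [intervalIntegral.integral_comp_sub_left (fun s => Pa α S s (f s)) r]
      rw [sub_self, sub_zero]
      apply intervalIntegral.integral_congr
      intro s hs
      rw [uIcc_of_le hr.le] at hs
      exact (hTPa s hs _).symm
    simpa [e] using h1
  · intro x t ht
    have h1 := full_graph hα1 hA_closed hA_dense hVc hVM hVS hS_comm hS_eq x t ht
    have h2 := conv_fubini hk ht (fun s _ => g_prim hα1 s) (hVc x)
    have e : (∫ s in (0:ℝ)..t, T s x)
        = ∫ s in (0:ℝ)..t, ∫ v in (0:ℝ)..s, g (α - 1) (s - v) • V v x := by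
      apply intervalIntegral.integral_congr
      intro s hs
      rw [uIcc_of_le ht.1] at hs
      simp only
      rw [hT, hcid s ⟨hs.1, hs.2.trans ht.2⟩]
    rw [e, h2]
    exact h1
end
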